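/- Let 0 < s < 1 and let the collision kernel b satisfy b(cos θ)·θ^{2+2s} → K as θ → 0+ for some K > 0. Let α ∈ (2s, 2], let F₀ be a Borel probability measure on ℝ³ which is not a single Dirac mass (i.e. there is no v₀ ∈ ℝ³ with F₀({v₀}) = 1), whose characteristic function ψ₀ belongs to 𝒦^α, and let ψ be a solution of the Fourier-transformed (Bobylev) homogeneous Boltzmann Cauchy problem with initial datum ψ₀, with t ↦ ψ(t,·) continuous into 𝒦^α. Then there exists T > 0 such that for every t ∈ (0, T] and every N ∈ ℕ one has ∫_{ℝ³} (1+|ξ|²)^N |ψ(t,ξ)|² dξ < ∞ (i.e. the measure solution has a density lying in the Sobolev space H^∞(ℝ³) for every 0 < t ≤ T). -/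

import Mathlib

noncomputable section

open MeasureTheory Real Filter Metric Set
open scoped RealInnerProductSpace Topology

/-- ℝ³ as a Euclidean space. -/
abbrev E3 : Type := EuclideanSpace ℝ (Fin 3)

/-- The surface measure on the unit sphere S² ⊂ ℝ³. -/
def sphμ : Measure (sphere (0 : E3) 1) := (volume : Measure E3).toSphere

/-- The characteristic function (Fourier transform) of a Borel measure on ℝ³,
`ψ(ξ) = ∫ e^{-i v·ξ} dΨ(v)`. -/
def charFn (Ψ : Measure E3) (ξ : E3) : ℂ :=
  ∫ v, Complex.exp (-(Complex.I * (⟪v, ξ⟫ : ℂ))) ∂Ψ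

/-- `ψ` is a characteristic function of some Borel probability measure on ℝ³. -/
def IsCharFn (ψ : E3 → ℂ) : Prop :=
  ∃ Ψ : Measure E3, IsProbabilityMeasure Ψ ∧ ψ = charFn Ψ

/-- Finiteness of `‖φ - 1‖_α`, i.e. the quantitative part of membership in `𝒦^α`. -/
def KBdd (α : ℝ) (φ : E3 → ℂ) : Prop :=
  ∃ C : ℝ, ∀ ξ : E3, ξ ≠ 0 → ‖φ ξ - 1‖ ≤ C * ‖ξ‖ ^ α

/-- Membership in the space `𝒦^α`. -/
def memK (α : ℝ) (φ : E3 → ℂ) : Prop := IsCharFn φ ∧ KBdd α φ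

/-- The distance `‖φ - φ'‖_α = sup_{ξ ≠ 0} |φ(ξ) - φ'(ξ)|/|ξ|^α` on `𝒦^α`. -/
def Kdist (α : ℝ) (φ φ' : E3 → ℂ) : ℝ :=
  ⨆ ξ : {ξ : E3 // ξ ≠ 0}, ‖φ ξ.1 - φ' ξ.1‖ / ‖(ξ.1 : E3)‖ ^ α

/-- `ξ⁺ = ξ/2 + (|ξ|/2)σ`. -/
def xiPlus (ξ : E3) (σ : sphere (0 : E3) 1) : E3 := (1/2 : ℝ) • ξ + (‖ξ‖ / 2) • (σ : E3)

/-- `ξ⁻ = ξ/2 - (|ξ|/2)σ`. -/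
def xiMinus (ξ : E3) (σ : sphere (0 : E3) 1) : E3 := (1/2 : ℝ) • ξ - (‖ξ‖ / 2) • (σ : E3)

/-- The Bobylev collision integrand at time `t`, frequency `ξ`, direction `σ`. -/
def bobylevIntegrand (b : ℝ → ℝ) (ψ : ℝ → E3 → ℂ) (t : ℝ) (ξ : E3)
    (σ : sphere (0 : E3) 1) : ℂ :=
  (b (⟪ξ, (σ : E3)⟫ / ‖ξ‖) : ℂ) *
    (ψ t (xiPlus ξ σ) * ψ t (xiMinus ξ σ) - ψ t ξ)

/-- `ψ : [0,∞) × ℝ³ → ℂ` is a solution of the Fourier-transformed (Bobylev)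
homogeneous Boltzmann Cauchy problem with collision kernel `b` and initial datum `ψ₀`. -/
structure IsBobylevSolution (b : ℝ → ℝ) (ψ : ℝ → E3 → ℂ) (ψ₀ : E3 → ℂ) : Prop where
  cont : ContinuousOn (fun p : ℝ × E3 => ψ p.1 p.2) (Set.Ici 0 ×ˢ Set.univ)
  init : ψ 0 = ψ₀
  isCharFn : ∀ t ≥ 0, IsCharFn (ψ t)
  integrable : ∀ t ≥ 0, ∀ ξ : E3, Integrable (bobylevIntegrand b ψ t ξ) sphμ
  eq : ∀ t ≥ 0, ∀ ξ : E3, HasDerivWithinAt (fun τ => ψ τ ξ)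
      (∫ σ, bobylevIntegrand b ψ t ξ σ ∂sphμ) (Set.Ici 0) t

/-- Continuity of `t ↦ ψ(t,·)` from `[0,∞)` into the metric space `(𝒦^α, ‖·‖_α)`. -/
def KContinuous (α : ℝ) (ψ : ℝ → E3 → ℂ) : Prop :=
  ∀ t₀ ∈ Set.Ici (0:ℝ), Tendsto (fun t => Kdist α (ψ t) (ψ t₀)) (𝓝[Set.Ici (0:ℝ)] t₀) (𝓝 0)

/-- The angular singularity assumption `b(cos θ) θ^{2+2s} → K` as `θ → 0+`. -/
def KernelSingular (b : ℝ → ℝ) (s K : ℝ) : Prop :=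
  Tendsto (fun θ : ℝ => b (Real.cos θ) * θ ^ (2 + 2*s)) (𝓝[>] 0) (𝓝 K)

section
open MeasureTheory Real Filter Metric Set
open scoped RealInnerProductSpace Topology

lemma charFn_eq (Ψ : Measure E3) (ξ : E3) : charFn Ψ ξ = charFun Ψ (-ξ) := by
  rw [charFn, charFun_apply]
  congr 1; ext v
  congr 1
  rw [inner_neg_right]; push_cast; ring

/-- `u` is one minus a symmetric characteristic function. -/
structure IsU (G : Measure E3) (u : E3 → ℝ) : Prop where
  prob : IsProbabilityMeasure G
  eq : ∀ ξ, u ξ = ∫ v, (1 - Real.cos ⟪v, ξ⟫) ∂G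

def symG (Ψ : Measure E3) : Measure E3 := Ψ ∗ (Ψ.map (fun v => (-1 : ℝ) • v))

lemma charFun_symG (Ψ : Measure E3) [IsProbabilityMeasure Ψ] (t : E3) :
    charFun (symG Ψ) t = ((‖charFun Ψ t‖ ^ 2 : ℝ) : ℂ) := by
  have : IsProbabilityMeasure (Ψ.map (fun v : E3 => (-1 : ℝ) • v)) :=
    Measure.isProbabilityMeasure_map (by fun_prop)
  rw [symG, charFun_conv, charFun_map_smul]
  rw [neg_one_smul, charFun_neg, Complex.mul_conj]
  simp [Complex.normSq_eq_norm_sq]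

lemma isU_of_charFn {Ψ : Measure E3} (h : IsProbabilityMeasure Ψ) :
    IsU (symG Ψ) (fun ξ => 1 - ‖charFn Ψ ξ‖ ^ 2) := by
  have : IsProbabilityMeasure (Ψ.map (fun v : E3 => (-1 : ℝ) • v)) :=
    Measure.isProbabilityMeasure_map (by fun_prop)
  have hG : IsProbabilityMeasure (symG Ψ) := by rw [symG]; infer_instance
  refine ⟨hG, fun ξ => ?_⟩
  have h1 := charFun_symG Ψ ξ
  have hi : Integrable (fun v : E3 => Real.cos ⟪v, ξ⟫) (symG Ψ) :=
    Integrable.of_bound (C := 1) (by fun_prop) (ae_of_all _ fun v => by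
      simpa using Real.abs_cos_le_one _)
  rw [integral_sub (integrable_const _) hi]
  simp only [integral_const, probReal_univ, smul_eq_mul, one_mul]
  congr 1
  rw [charFn_eq, charFun_neg, RCLike.norm_conj]
  have h2 := congrArg Complex.re h1
  rw [Complex.ofReal_re] at h2
  rw [← h2, charFun_apply, ← RCLike.re_eq_complex_re, ← integral_re]
  · congr 1; ext v
    simp [Complex.exp_re]
  · exact Integrable.of_bound (C := 1) (by fun_prop) (ae_of_all _ fun v => by
      simp [Complex.norm_exp])

lemma dirac_of_norm_one {Ψ : Measure E3} (h : IsProbabilityMeasure Ψ)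
    (h1 : ∀ ξ, ‖charFn Ψ ξ‖ = 1) : ∃ v₀, Ψ {v₀} = 1 := by
  have : IsProbabilityMeasure (Ψ.map (fun v : E3 => (-1 : ℝ) • v)) :=
    Measure.isProbabilityMeasure_map (by fun_prop)
  have hG : IsProbabilityMeasure (symG Ψ) := by rw [symG]; infer_instance
  have h2 : symG Ψ = Measure.dirac 0 := by
    apply Measure.ext_of_charFun
    ext t
    rw [charFun_symG, charFun_dirac]
    have := h1 (-t)
    rw [charFn_eq, neg_neg] at this
    simp [this]
  have h3 : symG Ψ {0}ᶜ = 0 := by rw [h2]; simp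
  rw [symG, Measure.conv, Measure.map_apply (by fun_prop) (by measurability)] at h3
  have h4 := Measure.ae_ae_of_ae_prod (p := fun z : E3 × E3 => z.1 + z.2 = 0)
    (μ := Ψ) (ν := Ψ.map (fun v : E3 => (-1 : ℝ) • v)) (by
      rw [ae_iff]; exact h3)
  obtain ⟨v, hv⟩ := h4.exists
  refine ⟨v, ?_⟩
  rw [ae_map_iff (by fun_prop) (by
    exact (isClosed_eq (by fun_prop) (by fun_prop)).measurableSet)] at hv
  have h5 : Ψ {v}ᶜ = 0 := by
    rw [ae_iff] at hv
    convert hv using 2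
    ext x
    simp only [mem_compl_iff, mem_singleton_iff, mem_setOf_eq, not_iff_not, neg_one_smul]
    constructor
    · rintro rfl; simp
    · intro h; exact (add_neg_eq_zero.mp h).symm
  rwa [prob_compl_eq_zero_iff (measurableSet_singleton v)] at h5

section
variable {G : Measure E3} {u : E3 → ℝ}

lemma IsU.integrable (h : IsU G u) (ξ : E3) :
    Integrable (fun v : E3 => 1 - Real.cos ⟪v, ξ⟫) G := by
  have := h.prob
  exact Integrable.of_bound (C := 2) (by fun_prop) (ae_of_all _ fun v => by
    rw [Real.norm_eq_abs, abs_le]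
    constructor <;> linarith [Real.cos_le_one ⟪v, ξ⟫, Real.neg_one_le_cos ⟪v, ξ⟫])

lemma IsU.nonneg (h : IsU G u) (ξ : E3) : 0 ≤ u ξ := by
  rw [h.eq]
  exact integral_nonneg fun v => by simpa using Real.cos_le_one _

lemma one_sub_cos_add_le (x y : ℝ) :
    1 - Real.cos (x + y) ≤ 2 * (1 - Real.cos x) + 2 * (1 - Real.cos y) := by
  have e : ∀ z : ℝ, 1 - Real.cos z = 2 * Real.sin (z/2) ^ 2 := fun z => by
    have := Real.cos_sq_add_sin_sq (z/2)
    have h2 := Real.cos_two_mul (z/2)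
    rw [mul_div_cancel₀ _ (by norm_num : (2:ℝ) ≠ 0)] at h2
    nlinarith
  rw [e, e, e, add_div, Real.sin_add]
  nlinarith [sq_nonneg (Real.sin (x/2) * Real.cos (y/2) - Real.cos (x/2) * Real.sin (y/2)),
    Real.sin_sq_add_cos_sq (x/2), Real.sin_sq_add_cos_sq (y/2), 
    mul_nonneg (sq_nonneg (Real.sin (x/2))) (sq_nonneg (Real.sin (y/2)))]

lemma abs_sin_nat_mul_le (n : ℕ) (x : ℝ) : |Real.sin (n * x)| ≤ n * |Real.sin x| := by
  induction n with
  | zero => simp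
  | succ n ih =>
    push_cast
    rw [add_mul, one_mul, Real.sin_add]
    calc _ ≤ |Real.sin (n*x)| * |Real.cos x| + |Real.cos (n * x)| * |Real.sin x| := by
          rw [← abs_mul, ← abs_mul]; exact abs_add_le _ _
      _ ≤ |Real.sin (n*x)| * 1 + 1 * |Real.sin x| := by
          gcongr <;> exact Real.abs_cos_le_one _
      _ ≤ _ := by linarith

lemma one_sub_cos_nat_mul_le (n : ℕ) (x : ℝ) :
    1 - Real.cos (n * x) ≤ n ^ 2 * (1 - Real.cos x) := by
  have e : ∀ z : ℝ, 1 - Real.cos z = 2 * Real.sin (z/2) ^ 2 := fun z => by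
    have := Real.cos_sq_add_sin_sq (z/2)
    have h2 := Real.cos_two_mul (z/2)
    rw [mul_div_cancel₀ _ (by norm_num : (2:ℝ) ≠ 0)] at h2
    nlinarith
  rw [e, e, mul_div_assoc]
  have := abs_sin_nat_mul_le n (x/2)
  have h2 := pow_le_pow_left₀ (abs_nonneg _) this 2
  rw [mul_pow, sq_abs, sq_abs] at h2
  linarith

lemma IsU.add_le (h : IsU G u) (x y : E3) : u (x + y) ≤ 2 * u x + 2 * u y := by
  rw [h.eq, h.eq, h.eq, ← integral_const_mul, ← integral_const_mul, ← integral_add]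
  · refine integral_mono (h.integrable _) ?_ fun v => ?_
    · exact ((h.integrable _).const_mul _).add ((h.integrable _).const_mul _)
    · simp only [inner_add_right]
      exact one_sub_cos_add_le _ _
  · exact (h.integrable _).const_mul _
  · exact (h.integrable _).const_mul _

lemma IsU.neg (h : IsU G u) (x : E3) : u (-x) = u x := by
  simp [h.eq]

lemma IsU.nsmul_le (h : IsU G u) (n : ℕ) (x : E3) : u ((n : ℝ) • x) ≤ n ^ 2 * u x := by
  rw [h.eq, h.eq, ← integral_const_mul]
  refine integral_mono (h.integrable _) ((h.integrable _).const_mul _) fun v => ?_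
  simp only [inner_smul_right]
  exact one_sub_cos_nat_mul_le _ _

lemma IsU.zero (h : IsU G u) : u 0 = 0 := by
  simp [h.eq]

end
end

section
open MeasureTheory Real Filter Metric Set
open scoped RealInnerProductSpace Topology Pointwise

instance : IsFiniteMeasure sphμ := by rw [sphμ]; infer_instance

/-- Action of an isometry on the sphere. -/
def rotS (R : E3 ≃ₗᵢ[ℝ] E3) (σ : sphere (0 : E3) 1) : sphere (0 : E3) 1 :=
  ⟨R σ, by simp⟩

lemma rotS_coe (R : E3 ≃ₗᵢ[ℝ] E3) (σ : sphere (0 : E3) 1) : (rotS R σ : E3) = R σ := rfl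

lemma continuous_rotS (R : E3 ≃ₗᵢ[ℝ] E3) : Continuous (rotS R) := by
  unfold rotS
  exact Continuous.subtype_mk (R.continuous.comp continuous_subtype_val) _

lemma measurePreserving_rotS (R : E3 ≃ₗᵢ[ℝ] E3) : MeasurePreserving (rotS R) sphμ sphμ := by
  refine ⟨(continuous_rotS R).measurable, ?_⟩
  ext s hs
  rw [Measure.map_apply (continuous_rotS R).measurable hs, sphμ,
    Measure.toSphere_apply' _ hs,
    Measure.toSphere_apply' _ ((continuous_rotS R).measurable hs)]
  congr 1
  have h1 := R.measurePreserving.measure_preimage_equiv (f := R.toHomeomorph.toMeasurableEquiv)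
    (Ioo (0:ℝ) 1 • ((↑) '' s : Set E3))
  rw [← h1]
  congr 1
  ext x
  simp only [Set.mem_smul, mem_image, mem_preimage]
  constructor
  · rintro ⟨a, ha, y, ⟨σ, hσ, rfl⟩, rfl⟩
    exact ⟨a, ha, _, ⟨_, hσ, rfl⟩, by simp [rotS_coe]⟩
  · rintro ⟨a, ha, y, ⟨σ, hσ, rfl⟩, h⟩
    refine ⟨a, ha, _, ⟨rotS R.symm σ, ?_, rfl⟩, ?_⟩
    · have : rotS R (rotS R.symm σ) = σ := by ext1; simp [rotS_coe]
      rwa [this]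
    · show a • R.symm (σ : E3) = x
      have h' : a • (σ : E3) = R x := h
      rw [← map_smul, h']; simp

lemma lintegral_rotS (R : E3 ≃ₗᵢ[ℝ] E3) (g : sphere (0 : E3) 1 → ENNReal)
    (hg : Measurable g) : ∫⁻ σ, g (rotS R σ) ∂sphμ = ∫⁻ σ, g σ ∂sphμ :=
  (measurePreserving_rotS R).lintegral_comp hg

lemma exists_perp (e z : E3) : ∃ p : E3, ‖p‖ = 1 ∧ ⟪e, p⟫ = 0 ∧ ⟪z, p⟫ = 0 := by
  let f : E3 →ₗ[ℝ] (Fin 2 → ℝ) := LinearMap.pi ![(innerₛₗ ℝ e), (innerₛₗ ℝ z)]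
  have hf : LinearMap.ker f ≠ ⊥ := LinearMap.ker_ne_bot_of_finrank_lt (by simp)
  obtain ⟨x, hx, hx0⟩ := (Submodule.ne_bot_iff _).1 hf
  have h1 := congrFun (LinearMap.mem_ker.1 hx) 0
  have h2 := congrFun (LinearMap.mem_ker.1 hx) 1
  simp [f] at h1 h2
  refine ⟨(‖x‖⁻¹) • x, ?_, ?_, ?_⟩
  · rw [norm_smul, norm_inv, norm_norm, inv_mul_cancel₀ (by simpa using hx0)]
  · rw [inner_smul_right, h1, mul_zero]
  · rw [inner_smul_right, h2, mul_zero]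

lemma exists_frame (e z : E3) (he : ‖e‖ = 1) : ∃ B : OrthonormalBasis (Fin 3) ℝ E3,
    B 0 = e ∧ ⟪z, B 2⟫ = 0 := by
  obtain ⟨p, hp, hep, hzp⟩ := exists_perp e z
  obtain ⟨q, hq, heq, hpq⟩ := exists_perp e p
  have ho : Orthonormal ℝ ![e, q, p] := by
    rw [orthonormal_iff_ite]
    intro i j
    fin_cases i <;> fin_cases j <;>
      simp [he, hp, hq, hep, heq, hpq, real_inner_comm]
  refine ⟨OrthonormalBasis.mk ho ?_, ?_, ?_⟩
  · rw [ho.linearIndependent.span_eq_top_of_card_eq_finrank (by simp)]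
  · simp
  · simpa using hzp

lemma cap_measure (e : E3) (he : ‖e‖ = 1) (r : ℝ) (hr : 0 < r) (hr1 : r ≤ 1) :
    ENNReal.ofReal (r ^ 2 / 256) ≤ sphμ {σ | ‖(σ : E3) - e‖ < r} := by
  obtain ⟨B, hB, -⟩ := exists_frame e e he
  have hm : MeasurableSet {σ : sphere (0 : E3) 1 | ‖(σ : E3) - e‖ < r} :=
    (isOpen_lt (by fun_prop) (by fun_prop)).measurableSet
  rw [sphμ, Measure.toSphere_apply' _ hm]
  let lo : Fin 3 → ℝ := ![1/4, -r/16, -r/16]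
  let hi : Fin 3 → ℝ := ![1/2, r/16, r/16]
  have hv : volume (Set.pi univ (fun i => Ioo (lo i) (hi i))) = ENNReal.ofReal (r^2/256) := by
    rw [Real.volume_pi_Ioo]
    simp [Fin.prod_univ_three, lo, hi]
    rw [← ENNReal.ofReal_mul (by norm_num), ← ENNReal.ofReal_mul (by nlinarith)]
    congr 1; ring
  let S : Set E3 := {x | ∀ i, B.repr x i ∈ Ioo (lo i) (hi i)}
  have hS : volume S = ENNReal.ofReal (r^2/256) := by
    rw [← hv, ← (EuclideanSpace.volume_preserving_symm_measurableEquiv_toLp (Fin 3)).measure_preimage_equiv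
        (univ.pi fun i => Ioo (lo i) (hi i)),
      ← B.measurePreserving_repr.measure_preimage_equiv (f := B.repr.toHomeomorph.toMeasurableEquiv)
        ((MeasurableEquiv.toLp 2 (Fin 3 → ℝ)).symm ⁻¹' (univ.pi fun i => Ioo (lo i) (hi i)))]
    congr 1
    ext x
    simp [S]
  have hsub : S ⊆ Ioo (0:ℝ) 1 • ((↑) '' {σ : sphere (0 : E3) 1 | ‖(σ : E3) - e‖ < r}) := by
    intro x hx
    have h0 := hx 0
    have h1 := hx 1
    have h2 := hx 2
    simp only [lo, hi, Matrix.cons_val_zero, Matrix.cons_val_one, Matrix.cons_val, mem_Ioo] at h0 h1 h2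
    have hx2 : ‖x‖ ^ 2 = (B.repr x 0)^2 + (B.repr x 1)^2 + (B.repr x 2)^2 := by
      rw [← B.repr.norm_map x, EuclideanSpace.norm_sq_eq]
      simp [Fin.sum_univ_three]
    set a := B.repr x 0
    set y1 := B.repr x 1
    set y2 := B.repr x 2
    have hy : y1 ^ 2 + y2 ^ 2 ≤ r ^ 2 / 128 := by
      have : y1 ^ 2 ≤ (r/16)^2 := sq_le_sq' (by linarith) (by linarith)
      have : y2 ^ 2 ≤ (r/16)^2 := sq_le_sq' (by linarith) (by linarith)
      linarith
    have hxa : a ≤ ‖x‖ := by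
      apply abs_le_of_sq_le_sq' _ (norm_nonneg _) |>.2
      nlinarith [sq_nonneg y1, sq_nonneg y2]
    have hxpos : 0 < ‖x‖ := by linarith
    have hx1 : ‖x‖ < 1 := by
      apply lt_of_pow_lt_pow_left₀ 2 (by norm_num)
      nlinarith
    refine Set.mem_smul.2 ⟨‖x‖, ⟨hxpos, hx1⟩, ‖x‖⁻¹ • x, ?_, ?_⟩
    · refine ⟨⟨‖x‖⁻¹ • x, ?_⟩, ?_, rfl⟩
      · simp [norm_smul, hxpos.ne']
      · show ‖‖x‖⁻¹ • x - e‖ < r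
        have hin : ⟪x, e⟫ = a := by
          show _ = B.repr x 0
          rw [B.repr_apply_apply, hB, real_inner_comm]
        apply lt_of_pow_lt_pow_left₀ 2 hr.le
        rw [norm_sub_sq_real, inner_smul_left, hin, he, norm_smul]
        simp only [norm_inv, norm_norm, inv_mul_cancel₀ hxpos.ne', RCLike.conj_to_real]
        have : 1 - ‖x‖⁻¹ * a ≤ r ^ 2 / 8 := by
          rw [sub_le_iff_le_add, ← sub_le_iff_le_add', ← div_eq_inv_mul, le_div_iff₀ hxpos]
          have h3 : (‖x‖ - a) * (‖x‖ + a) ≤ r^2/128 := by nlinarith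
          have h4 : (‖x‖ - a) * (1/2) ≤ (‖x‖ - a) * (‖x‖ + a) := by
            apply mul_le_mul_of_nonneg_left <;> linarith
          nlinarith
        nlinarith
    · rw [smul_smul, mul_inv_cancel₀ hxpos.ne', one_smul]
  calc _ = volume S := hS.symm
    _ ≤ volume _ := measure_mono hsub
    _ ≤ _ := by
      rw [finrank_euclideanSpace_fin]
      exact le_mul_of_one_le_left' (by norm_num)

end

section
open MeasureTheory Real Filter Metric Set
open scoped RealInnerProductSpace Topology

lemma kernel_lower (s K : ℝ) (hs0 : 0 < s) (hK : 0 < K) (b : ℝ → ℝ)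
    (hb_sing : KernelSingular b s K) :
    ∃ cb > 0, ∃ rb > 0, rb ≤ 1 ∧ ∀ e σ : E3, ‖e‖ = 1 → ‖σ‖ = 1 → 0 < ‖σ - e‖ → ‖σ - e‖ < rb →
      cb * ‖σ - e‖ ^ (-(2 + 2 * s)) ≤ b ⟪e, σ⟫ := by
  have h1 : ∀ᶠ θ in 𝓝[>] (0:ℝ), K / 2 < b (Real.cos θ) * θ ^ (2 + 2 * s) :=
    hb_sing.eventually (lt_mem_nhds (by linarith))
  rw [eventually_nhdsWithin_iff, Metric.eventually_nhds_iff] at h1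
  obtain ⟨θ0, hθ0, h1⟩ := h1
  refine ⟨K / 2 * 2 ^ (-(2 + 2 * s)), by positivity, min 1 (θ0 / 2), by positivity,
    min_le_left _ _, ?_⟩
  intro e σ he hσ hd0 hd
  set d := ‖σ - e‖ with hdd
  have hd2 : d ^ 2 = 2 - 2 * ⟪e, σ⟫ := by
    rw [hdd, norm_sub_sq_real, he, hσ, real_inner_comm]; ring
  have hp : ⟪e, σ⟫ < 1 := by nlinarith
  have hp' : -1 ≤ ⟪e, σ⟫ := by
    have := abs_real_inner_le_norm e σ
    rw [he, hσ] at this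
    linarith [abs_le.1 this]
  set θ := Real.arccos ⟪e, σ⟫ with hθ
  have hcos : Real.cos θ = ⟪e, σ⟫ := Real.cos_arccos hp' hp.le
  have hθpos : 0 < θ := Real.arccos_pos.2 hp
  have hθpi : θ ≤ π := Real.arccos_le_pi _
  have hle : θ ≤ 2 * d := by
    have h2 := Real.cos_le_one_sub_mul_cos_sq (x := θ) (by rw [abs_of_pos hθpos]; exact hθpi)
    rw [hcos] at h2
    have h3 : 2 * (2 / π ^ 2 * θ ^ 2) ≤ d ^ 2 := by linarith
    have h4 : θ ^ 2 ≤ (2 * d) ^ 2 := by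
      have : θ ^ 2 = π ^ 2 / 4 * (2 * (2 / π ^ 2 * θ ^ 2)) := by field_simp; ring
      rw [this]
      have h5 : π ^ 2 / 4 ≤ 4 := by nlinarith [Real.pi_le_four, Real.pi_pos]
      nlinarith [sq_nonneg d]
    exact le_of_sq_le_sq h4 (by positivity)
  have h6 := h1 (y := θ) (by
    rw [Real.dist_eq, sub_zero, abs_of_pos hθpos]
    have := lt_of_lt_of_le hd (min_le_right _ _)
    linarith) hθpos
  rw [hcos] at h6
  calc K / 2 * 2 ^ (-(2 + 2 * s)) * d ^ (-(2 + 2 * s)) = K / 2 * (2 * d) ^ (-(2 + 2 * s)) := by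
        rw [Real.mul_rpow (by norm_num) hd0.le]; ring
    _ ≤ K / 2 * θ ^ (-(2 + 2 * s)) := by
        apply mul_le_mul_of_nonneg_left _ (by positivity)
        exact Real.rpow_le_rpow_of_nonpos hθpos hle (by linarith)
    _ ≤ b ⟪e, σ⟫ := by
        rw [Real.rpow_neg hθpos.le, ← div_eq_mul_inv, div_le_iff₀ (by positivity)]
        exact h6.le

def capf (b : ℝ → ℝ) (e : E3) (g : E3 → ℝ) (σ : sphere (0 : E3) 1) : ℝ :=
  if ‖(σ : E3) - e‖ < 1 then b ⟪e, (σ : E3)⟫ * g (e - σ) else 0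

lemma scalar_tau (a τ q m : ℝ) (ha0 : 0 ≤ a) (hτ : 0 < τ) (haτ : a * τ ^ 2 ≤ 1)
    (hq1 : τ / 4 ≤ q) (hq2 : q ≤ 3 * τ / 4) (hlo : a ≤ |m|) (hhi : |m| ≤ 2 * a) :
    a ^ 2 * τ ^ 4 / 100 ≤ 1 - Real.cos (2 * q * (τ / 2 * m)) := by
  set y := 2 * q * (τ / 2 * m) with hyd
  have hyabs : |y| = 2 * q * (τ / 2 * |m|) := by
    rw [hyd, abs_mul, abs_mul (τ / 2), abs_of_nonneg (a := 2 * q) (by linarith),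
      abs_of_pos (a := τ / 2) (by positivity)]
  have hy1 : a * τ ^ 2 / 4 ≤ |y| := by
    rw [hyabs]
    calc a * τ ^ 2 / 4 = 2 * (τ / 4) * (τ / 2 * a) := by ring
      _ ≤ _ := by gcongr; linarith
  have hy2 : |y| ≤ 3 := by
    rw [hyabs]
    calc _ ≤ 2 * (3 * τ / 4) * (τ / 2 * (2 * a)) := by gcongr
      _ = 3/2 * (a * τ ^ 2) := by ring
      _ ≤ 3 := by linarith
  have h4 := Real.cos_le_one_sub_mul_cos_sq (x := y) (hy2.trans Real.pi_gt_three.le)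
  have h5 : a ^ 2 * τ ^ 4 / 16 ≤ y ^ 2 := by
    rw [← sq_abs y]
    calc a ^ 2 * τ ^ 4 / 16 = (a * τ ^ 2 / 4) ^ 2 := by ring
      _ ≤ _ := pow_le_pow_left₀ (by positivity) hy1 2
  have h6 : 2 / 10 ≤ 2 / π ^ 2 := by
    apply div_le_div_of_nonneg_left (by norm_num) (by positivity)
    nlinarith [Real.pi_lt_d2, Real.pi_pos]
  have h7 : 2 / 10 * (a ^ 2 * τ ^ 4 / 16) ≤ 2 / π ^ 2 * y ^ 2 := by gcongr
  have h8 : 0 ≤ a ^ 2 * τ ^ 4 := by positivity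
  linarith

set_option maxHeartbeats 1000000 in
lemma inner_tau (s : ℝ) (hs0 : 0 < s) (b : ℝ → ℝ) (hb_nonneg : ∀ x, 0 ≤ b x)
    (cb rb : ℝ) (hcb : 0 < cb) (hrb1 : rb ≤ 1)
    (hb : ∀ e σ : E3, ‖e‖ = 1 → ‖σ‖ = 1 → 0 < ‖σ - e‖ → ‖σ - e‖ < rb →
      cb * ‖σ - e‖ ^ (-(2 + 2 * s)) ≤ b ⟪e, σ⟫)
    (e : E3) (he : ‖e‖ = 1) (w : E3) (τ : ℝ) (hτ : 0 < τ) (hτr : 2 * τ ≤ rb)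
    (haτ : ‖w‖ * τ ^ 2 ≤ 1) :
    ENNReal.ofReal (cb * (2 * τ) ^ (-(2 + 2 * s)) * (‖w‖ ^ 2 * τ ^ 4 / 100 * ((τ/4) ^ 2 / 256)))
      ≤ 4 * ∫⁻ σ, ENNReal.ofReal (capf b e (fun x => 1 - Real.cos ⟪w, x⟫) σ) ∂sphμ := by
  set a := ‖w‖ with ha
  obtain ⟨B, hB0, hB2⟩ := exists_frame e w he
  have hsum : ⟪w, e⟫ ^ 2 + ⟪w, B 1⟫ ^ 2 = a ^ 2 := by
    have := B.sum_sq_norm_inner_left w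
    simp only [Fin.sum_univ_three, hB0, hB2, Real.norm_eq_abs, sq_abs] at this
    rw [← this]; ring
  -- choice of sign
  obtain ⟨ε, hε, hlo, hhi⟩ : ∃ ε : ℝ, ε ^ 2 = 1 ∧ a ≤ |⟪w, e⟫ + ε * ⟪w, B 1⟫| ∧
      |⟪w, e⟫ + ε * ⟪w, B 1⟫| ≤ 2 * a := by
    have ha0 : 0 ≤ a := norm_nonneg _
    have key : ∀ ε : ℝ, ε ^ 2 = 1 → 0 ≤ ⟪w, e⟫ * (ε * ⟪w, B 1⟫) →
        a ≤ |⟪w, e⟫ + ε * ⟪w, B 1⟫| ∧ |⟪w, e⟫ + ε * ⟪w, B 1⟫| ≤ 2 * a := by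
      intro ε h1 h2
      have h3 : (ε * ⟪w, B 1⟫) ^ 2 = ⟪w, B 1⟫ ^ 2 := by rw [mul_pow, h1, one_mul]
      constructor
      · apply le_of_sq_le_sq _ (abs_nonneg _)
        rw [sq_abs]; nlinarith
      · apply le_of_sq_le_sq _ (by positivity)
        rw [sq_abs]
        nlinarith [sq_nonneg (⟪w, e⟫ - ε * ⟪w, B 1⟫)]
    rcases le_total 0 (⟪w, e⟫ * ⟪w, B 1⟫) with h | h
    · exact ⟨1, by norm_num, key 1 (by norm_num) (by linarith)⟩
    · exact ⟨-1, by norm_num, key (-1) (by norm_num) (by linarith)⟩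
  have hτ1 : τ ≤ 1 / 2 := by linarith
  set w' := Real.sqrt (1 - τ ^ 2 / 2) with hw'
  have hw'2 : w' ^ 2 = 1 - τ ^ 2 / 2 := Real.sq_sqrt (by nlinarith)
  set n : E3 := (τ / 2) • e + (τ / 2 * ε) • B 1 + w' • B 2 with hn
  have h01 : ⟪e, B 1⟫ = 0 := by rw [← hB0]; exact B.orthonormal.2 (by decide)
  have h02 : ⟪e, B 2⟫ = 0 := by rw [← hB0]; exact B.orthonormal.2 (by decide)
  have h12 : ⟪B 1, B 2⟫ = 0 := B.orthonormal.2 (by decide)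
  have hen : ⟪e, n⟫ = τ / 2 := by
    simp [hn, inner_add_right, inner_smul_right, h01, h02, he]
  have h1n : ⟪B 1, n⟫ = τ / 2 * ε := by
    simp [hn, inner_add_right, inner_smul_right, real_inner_comm, h01, h12]
  have h2n : ⟪B 2, n⟫ = w' := by
    simp [hn, inner_add_right, inner_smul_right, real_inner_comm, h02, h12]
  have hnn : ‖n‖ = 1 := by
    have := B.sum_sq_norm_inner_right n
    simp only [Fin.sum_univ_three, hB0, hen, h1n, h2n, Real.norm_eq_abs, sq_abs] at this
    have h3 : ‖n‖ ^ 2 = 1 := by rw [← this, mul_pow, hε, hw'2]; ring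
    nlinarith [norm_nonneg n]
  have hwn : ⟪w, n⟫ = τ / 2 * (⟪w, e⟫ + ε * ⟪w, B 1⟫) := by
    simp only [hn, inner_add_right, inner_smul_right, hB2]; ring
  set R := (ℝ ∙ n)ᗮ.reflection with hR
  have hRσ : ∀ σ : E3, R σ = σ - (2 * ⟪n, σ⟫) • n := by
    intro σ
    rw [hR, Submodule.reflection_orthogonal_apply, Submodule.reflection_singleton_apply, hnn]
    simp only [RCLike.ofReal_real_eq_id, id]
    module
  set g : E3 → ℝ := fun x => 1 - Real.cos ⟪w, x⟫ with hg
  have hg0 : ∀ x, 0 ≤ g x := fun x => by simpa [hg] using Real.cos_le_one _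
  set A : Set (sphere (0:E3) 1) := {σ | ‖(σ : E3) - e‖ < τ / 4} with hA
  set C : Set (sphere (0:E3) 1) := {σ | ‖(σ : E3) - e‖ < 2 * τ} with hC
  have hAm : MeasurableSet A := (isOpen_lt (by fun_prop) (by fun_prop)).measurableSet
  have hCm : MeasurableSet C := (isOpen_lt (by fun_prop) (by fun_prop)).measurableSet
  set h : sphere (0:E3) 1 → ENNReal := C.indicator (fun σ => ENNReal.ofReal (g (e - σ))) with hh
  have hhm : Measurable h := by
    apply Measurable.indicator _ hCm
    apply Measurable.ennreal_ofReal
    apply Continuous.measurable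
    simp only [hg]; fun_prop
  -- step 1: pointwise on A
  have step1 : ∀ σ ∈ A, ENNReal.ofReal (a ^ 2 * τ ^ 4 / 100) ≤ 2 * h σ + 2 * h (rotS R σ) := by
    intro σ hσ
    have hσ' : ‖(σ : E3) - e‖ < τ / 4 := hσ
    have hin : |⟪n, (σ : E3)⟫ - τ / 2| ≤ τ / 4 := by
      rw [← hen, real_inner_comm n e, ← inner_sub_right]
      refine (abs_real_inner_le_norm _ _).trans ?_
      rw [hnn, one_mul]; exact hσ'.le
    obtain ⟨hin1, hin2⟩ := abs_le.1 hin
    have hσC : σ ∈ C := show ‖(σ : E3) - e‖ < 2 * τ by linarith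
    have hRC : rotS R σ ∈ C := by
      show ‖R (σ : E3) - e‖ < 2 * τ
      rw [hRσ]
      calc ‖(σ : E3) - (2 * ⟪n, (σ : E3)⟫) • n - e‖ = ‖((σ : E3) - e) - (2 * ⟪n, (σ : E3)⟫) • n‖ := by
            congr 1; abel
        _ ≤ ‖(σ : E3) - e‖ + ‖(2 * ⟪n, (σ : E3)⟫) • n‖ := norm_sub_le _ _
        _ < 2 * τ := by
            rw [norm_smul, hnn, Real.norm_eq_abs, abs_of_nonneg (by linarith)]
            linarith
    rw [hh, indicator_of_mem hσC, indicator_of_mem hRC]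
    have e2 : ∀ x : ℝ, (2 : ENNReal) * ENNReal.ofReal x = ENNReal.ofReal (2 * x) := by
      intro x
      rw [ENNReal.ofReal_mul (by norm_num)]; simp
    rw [e2, e2, ← ENNReal.ofReal_add (by have := hg0 (e - σ); positivity)
        (by have := hg0 (e - rotS R σ); positivity)]
    apply ENNReal.ofReal_le_ofReal
    have hy : ⟪w, e - (σ : E3)⟫ + -⟪w, e - (rotS R σ : E3)⟫ = -(2 * ⟪n, (σ : E3)⟫ * ⟪w, n⟫) := by
      rw [rotS_coe, hRσ]
      simp only [inner_sub_right, inner_smul_right]; ring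
    have h3 := one_sub_cos_add_le ⟪w, e - (σ : E3)⟫ (-⟪w, e - (rotS R σ : E3)⟫)
    rw [hy, Real.cos_neg, Real.cos_neg] at h3
    refine le_trans ?_ h3
    rw [hwn]
    exact scalar_tau a τ _ _ (norm_nonneg _) hτ haτ (by linarith) (by linarith) hlo hhi
  have step2 : ENNReal.ofReal (a ^ 2 * τ ^ 4 / 100) * ENNReal.ofReal ((τ/4) ^ 2 / 256) ≤
      4 * ∫⁻ σ, h σ ∂sphμ := by
    calc _ ≤ ENNReal.ofReal (a ^ 2 * τ ^ 4 / 100) * sphμ A := by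
          gcongr
          exact cap_measure e he (τ / 4) (by positivity) (by linarith)
      _ = ∫⁻ σ in A, ENNReal.ofReal (a ^ 2 * τ ^ 4 / 100) ∂sphμ := by
          rw [setLIntegral_const]
      _ ≤ ∫⁻ σ in A, (2 * h σ + 2 * h (rotS R σ)) ∂sphμ := setLIntegral_mono' hAm step1
      _ ≤ ∫⁻ σ, (2 * h σ + 2 * h (rotS R σ)) ∂sphμ := setLIntegral_le_lintegral _ _
      _ = 2 * ∫⁻ σ, h σ ∂sphμ + 2 * ∫⁻ σ, h (rotS R σ) ∂sphμ := by
          rw [lintegral_add_left (hhm.const_mul _), lintegral_const_mul _ hhm,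
            lintegral_const_mul (f := fun σ => h (rotS R σ)) _ (hhm.comp (continuous_rotS R).measurable)]
      _ = _ := by rw [lintegral_rotS R h hhm]; ring
  have step3 : ENNReal.ofReal (cb * (2 * τ) ^ (-(2 + 2 * s))) * ∫⁻ σ, h σ ∂sphμ ≤
      ∫⁻ σ, ENNReal.ofReal (capf b e g σ) ∂sphμ := by
    rw [← lintegral_const_mul _ hhm]
    apply lintegral_mono
    intro σ
    by_cases hσ : σ ∈ C
    · have hσ' : ‖(σ : E3) - e‖ < 2 * τ := hσ
      simp only [hh]
      rw [indicator_of_mem hσ, ← ENNReal.ofReal_mul (by positivity)]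
      apply ENNReal.ofReal_le_ofReal
      rw [capf, if_pos (by linarith)]
      rcases eq_or_lt_of_le (norm_nonneg ((σ : E3) - e)) with h0 | h0
      · have : e - (σ : E3) = 0 := by
          rw [← neg_sub, norm_eq_zero.1 h0.symm, neg_zero]
        rw [this]; simp [hg]
      · apply mul_le_mul_of_nonneg_right _ (hg0 _)
        refine le_trans ?_ (hb e σ he (by simp) h0 (by linarith))
        apply mul_le_mul_of_nonneg_left _ hcb.le
        exact Real.rpow_le_rpow_of_nonpos h0 hσ'.le (by linarith)
    · simp only [hh]; rw [indicator_of_notMem hσ]; simp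
  calc _ = ENNReal.ofReal (cb * (2 * τ) ^ (-(2 + 2 * s))) *
        (ENNReal.ofReal (a ^ 2 * τ ^ 4 / 100) * ENNReal.ofReal ((τ/4) ^ 2 / 256)) := by
        rw [← ENNReal.ofReal_mul (by positivity), ← ENNReal.ofReal_mul (by positivity)]
    _ ≤ ENNReal.ofReal (cb * (2 * τ) ^ (-(2 + 2 * s))) * (4 * ∫⁻ σ, h σ ∂sphμ) := by gcongr
    _ = 4 * (ENNReal.ofReal (cb * (2 * τ) ^ (-(2 + 2 * s))) * ∫⁻ σ, h σ ∂sphμ) := by ring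
    _ ≤ _ := by gcongr

end

section
open MeasureTheory Real Filter Metric Set
open scoped RealInnerProductSpace Topology

lemma inner_lower (s K : ℝ) (hs0 : 0 < s) (hs1 : s < 1) (hK : 0 < K) (b : ℝ → ℝ)
    (hb_nonneg : ∀ x, 0 ≤ b x) (hb_sing : KernelSingular b s K) :
    ∃ c > 0, ∀ e w : E3, ‖e‖ = 1 → ENNReal.ofReal (c * min (‖w‖ ^ 2) (‖w‖ ^ s)) ≤
      ∫⁻ σ, ENNReal.ofReal (capf b e (fun x => 1 - Real.cos ⟪w, x⟫) σ) ∂sphμ := by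
  obtain ⟨cb, hcb, rb, hrb, hrb1, hb⟩ := kernel_lower s K hs0 hK b hb_sing
  set τ0 := rb / 2 with hτ0
  have hτ0p : 0 < τ0 := by positivity
  set c := cb * 2 ^ (-(2 + 2 * s)) / 409600 * τ0 ^ (4 - 2 * s) / 4 with hc
  refine ⟨c, by positivity, fun e w he => ?_⟩
  have key : ∀ τ : ℝ, 0 < τ → 2 * τ ≤ rb → ‖w‖ * τ ^ 2 ≤ 1 →
      c * min (‖w‖ ^ 2) (‖w‖ ^ s) ≤
        cb * 2 ^ (-(2 + 2 * s)) / 409600 * τ ^ (4 - 2 * s) / 4 * ‖w‖ ^ 2 →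
      ENNReal.ofReal (c * min (‖w‖ ^ 2) (‖w‖ ^ s)) ≤
      ∫⁻ σ, ENNReal.ofReal (capf b e (fun x => 1 - Real.cos ⟪w, x⟫) σ) ∂sphμ := by
    intro τ h0 h1 h2 h3
    have h4 := inner_tau s hs0 b hb_nonneg cb rb hcb hrb1 hb e he w τ h0 h1 h2
    have h5 : cb * (2 * τ) ^ (-(2 + 2 * s)) * (‖w‖ ^ 2 * τ ^ 4 / 100 * ((τ/4) ^ 2 / 256)) =
        4 * (cb * 2 ^ (-(2 + 2 * s)) / 409600 * τ ^ (4 - 2 * s) / 4 * ‖w‖ ^ 2) := by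
      have h6 : τ ^ (4 - 2 * s) = τ ^ (-(2 + 2 * s)) * τ ^ 6 := by
        rw [← Real.rpow_natCast, ← Real.rpow_add h0]; congr 1; push_cast; ring
      rw [Real.mul_rpow (by norm_num) h0.le, h6]; ring
    rw [h5, ENNReal.ofReal_mul (by norm_num)] at h4
    have h7 : ENNReal.ofReal 4 = 4 := by simp
    rw [h7] at h4
    have h8 := (ENNReal.mul_le_mul_iff_right (by norm_num) (by norm_num)).1 h4
    exact (ENNReal.ofReal_le_ofReal h3).trans h8
  rcases le_total ‖w‖ 1 with h | h
  · apply key τ0 hτ0p (by linarith)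
    · have : τ0 ^ 2 ≤ 1 := by nlinarith
      nlinarith [norm_nonneg w]
    · rw [hc]
      gcongr
      exact min_le_left _ _
  · have hw0 : 0 < ‖w‖ := by linarith
    have ha : ‖w‖ ^ (-(1/2) : ℝ) ≤ 1 := Real.rpow_le_one_of_one_le_of_nonpos h (by norm_num)
    have ha2 : (‖w‖ ^ (-(1/2) : ℝ)) ^ 2 = ‖w‖⁻¹ := by
      rw [← Real.rpow_natCast, ← Real.rpow_mul hw0.le, ← Real.rpow_neg_one]; norm_num
    apply key (τ0 * ‖w‖ ^ (-(1/2) : ℝ)) (by positivity)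
    · nlinarith
    · rw [mul_pow, ha2]
      have : τ0 ^ 2 ≤ 1 := by nlinarith
      field_simp; exact this
    · rw [hc]
      have h6 : (τ0 * ‖w‖ ^ (-(1/2) : ℝ)) ^ (4 - 2 * s) * ‖w‖ ^ 2 = τ0 ^ (4 - 2 * s) * ‖w‖ ^ s := by
        rw [Real.mul_rpow hτ0p.le (by positivity), ← Real.rpow_mul hw0.le, mul_assoc]
        congr 1
        rw [← Real.rpow_natCast, ← Real.rpow_add hw0]; congr 1; push_cast; ring
      calc _ ≤ cb * 2 ^ (-(2 + 2 * s)) / 409600 * τ0 ^ (4 - 2 * s) / 4 * ‖w‖ ^ s := by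
            gcongr; exact min_le_right _ _
        _ = cb * 2 ^ (-(2 + 2 * s)) / 409600 / 4 * (τ0 ^ (4 - 2 * s) * ‖w‖ ^ s) := by ring
        _ ≤ _ := by rw [← h6]; apply le_of_eq; ring

lemma tail_lower {G : Measure E3} {u : E3 → ℝ} (h : IsU G u) (η : E3) (μ0 m : ℝ) (hμ : 0 < μ0)
    (hu : μ0 ≤ u η) (hm : m ^ 2 * ‖η‖ ^ 2 ≤ μ0) (hm0 : 0 ≤ m) :
    ENNReal.ofReal (μ0 / 4) ≤ G {v | m ≤ ‖v‖} := by
  have := h.prob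
  set S : Set E3 := {v | m ≤ ‖v‖} with hS
  have hSm : MeasurableSet S := measurableSet_le measurable_const measurable_norm
  have h1 : u η ≤ ∫ v, (S.indicator (fun _ => (2:ℝ)) v + μ0 / 2) ∂G := by
    rw [h.eq]
    refine integral_mono (h.integrable _) ?_ fun v => ?_
    · exact ((integrable_const _).indicator hSm).add (integrable_const _)
    · simp only
      by_cases hv : v ∈ S
      · rw [indicator_of_mem hv]
        linarith [Real.neg_one_le_cos ⟪v, η⟫]
      · rw [indicator_of_notMem hv]
        have hv' : ‖v‖ < m := not_le.1 hv
        have h2 := Real.one_sub_sq_div_two_le_cos (x := ⟪v, η⟫)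
        have h3 : ⟪v, η⟫ ^ 2 ≤ m ^ 2 * ‖η‖ ^ 2 := by
          rw [← sq_abs, ← mul_pow]
          apply pow_le_pow_left₀ (abs_nonneg _)
          refine (abs_real_inner_le_norm _ _).trans ?_
          gcongr
        linarith
  rw [integral_add ((integrable_const _).indicator hSm) (integrable_const _),
    integral_indicator_const _ hSm, integral_const] at h1
  simp only [probReal_univ, one_mul, smul_eq_mul] at h1
  have h4 : μ0 / 4 ≤ G.real S := by linarith
  rw [← ofReal_measureReal]
  exact ENNReal.ofReal_le_ofReal h4

lemma coercive (s K : ℝ) (hs0 : 0 < s) (hs1 : s < 1) (hK : 0 < K) (b : ℝ → ℝ)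
    (hb_meas : Measurable b)
    (hb_nonneg : ∀ x, 0 ≤ b x) (hb_sing : KernelSingular b s K) (η : E3) (μ0 : ℝ) (hμ : 0 < μ0) :
    ∃ κ > 0, ∀ (G : Measure E3) (u : E3 → ℝ), IsU G u → μ0 ≤ u η → ∀ ξ e : E3, ‖e‖ = 1 → 
      ξ = ‖ξ‖ • e →
      ENNReal.ofReal (κ * min (‖ξ‖ ^ 2) (‖ξ‖ ^ s)) ≤
      ∫⁻ σ : sphere (0 : E3) 1, ENNReal.ofReal
        (if ‖(σ : E3) - e‖ < 1 then b ⟪e, (σ : E3)⟫ * u (xiMinus ξ σ) else 0) ∂sphμ := by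
  obtain ⟨c, hc, hlow⟩ := inner_lower s K hs0 hs1 hK b hb_nonneg hb_sing
  set m := min 1 (Real.sqrt μ0 / (‖η‖ + 1)) with hm
  have hm0 : 0 < m := by positivity
  have hm1 : m ≤ 1 := min_le_left _ _
  have hmη : m ^ 2 * ‖η‖ ^ 2 ≤ μ0 := by
    rw [← mul_pow]
    have h1 : m * ‖η‖ ≤ Real.sqrt μ0 := by
      calc m * ‖η‖ ≤ Real.sqrt μ0 / (‖η‖ + 1) * (‖η‖ + 1) := by
            gcongr
            · exact min_le_right _ _
            · linarith
        _ = Real.sqrt μ0 := by field_simp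
    calc _ ≤ Real.sqrt μ0 ^ 2 := by gcongr
      _ = μ0 := Real.sq_sqrt hμ.le
  refine ⟨c * (m / 2) ^ 2 * (μ0 / 4), by positivity, fun G u hu hη ξ e he hξ => ?_⟩
  have := hu.prob
  set S : Set E3 := {v | m ≤ ‖v‖} with hS
  have hSm : MeasurableSet S := measurableSet_le measurable_const measurable_norm
  have hm2 : m / 2 ≤ 1 := by linarith
  have hG := tail_lower hu η μ0 m hμ hη hmη hm0.le
  set F : E3 → sphere (0:E3) 1 → ENNReal := fun v σ =>
    ENNReal.ofReal (capf b e (fun x => 1 - Real.cos ⟪(‖ξ‖ / 2) • v, x⟫) σ) with hF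
  have hxi : ∀ σ : sphere (0:E3) 1, xiMinus ξ σ = (‖ξ‖ / 2) • (e - (σ : E3)) := by
    intro σ
    rw [xiMinus, smul_sub]
    nth_rewrite 1 [hξ]
    rw [smul_smul]; ring_nf
  have hFm : Measurable (Function.uncurry F) := by
    simp only [hF, capf, Function.uncurry_def]
    apply Measurable.ennreal_ofReal
    apply Measurable.ite
    · exact measurableSet_lt (by fun_prop) (by fun_prop)
    · fun_prop
    · fun_prop
  have step : ∀ σ : sphere (0:E3) 1, ∫⁻ v, F v σ ∂G = ENNReal.ofReal
        (if ‖(σ : E3) - e‖ < 1 then b ⟪e, (σ : E3)⟫ * u (xiMinus ξ σ) else 0) := by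
    intro σ
    by_cases h : ‖(σ : E3) - e‖ < 1
    · simp only [hF, capf, if_pos h]
      rw [← ofReal_integral_eq_lintegral_ofReal, integral_const_mul, hu.eq, hxi]
      · simp only [inner_smul_left, inner_smul_right]; rfl
      · have := (hu.integrable (xiMinus ξ σ)).const_mul (b ⟪e, (σ : E3)⟫)
        refine this.congr (ae_of_all _ fun v => ?_)
        simp only [hxi, inner_smul_left, inner_smul_right]; rfl
      · exact ae_of_all _ fun v => mul_nonneg (hb_nonneg _) (by simpa using Real.cos_le_one _)
    · simp only [hF, capf, if_neg h]; simp
  simp only [← step]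
  rw [lintegral_lintegral_swap (by exact (hFm.comp measurable_swap).aemeasurable)]
  calc _ = ENNReal.ofReal (c * ((m/2) ^ 2 * min (‖ξ‖ ^ 2) (‖ξ‖ ^ s))) * ENNReal.ofReal (μ0 / 4) := by
        rw [← ENNReal.ofReal_mul (by positivity)]; congr 1; ring
    _ ≤ ENNReal.ofReal (c * ((m/2) ^ 2 * min (‖ξ‖ ^ 2) (‖ξ‖ ^ s))) * G S := by gcongr
    _ = ∫⁻ v in S, ENNReal.ofReal (c * ((m/2) ^ 2 * min (‖ξ‖ ^ 2) (‖ξ‖ ^ s))) ∂G := by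
        rw [setLIntegral_const]
    _ ≤ ∫⁻ v in S, ∫⁻ σ, F v σ ∂sphμ ∂G := by
        refine setLIntegral_mono' hSm fun v hv => ?_
        refine le_trans (ENNReal.ofReal_le_ofReal ?_) (hlow e ((‖ξ‖ / 2) • v) he)
        apply mul_le_mul_of_nonneg_left _ hc.le
        have hv' : m ≤ ‖v‖ := hv
        have hn : m / 2 * ‖ξ‖ ≤ ‖(‖ξ‖ / 2) • v‖ := by
          rw [norm_smul, Real.norm_eq_abs, abs_of_nonneg (by positivity)]
          nlinarith [norm_nonneg ξ]
        apply le_min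
        · calc _ ≤ (m/2) ^ 2 * ‖ξ‖ ^ 2 := by gcongr; exact min_le_left _ _
            _ = (m / 2 * ‖ξ‖) ^ 2 := by ring
            _ ≤ _ := by gcongr
        · calc _ ≤ (m/2) ^ 2 * ‖ξ‖ ^ s := by gcongr; exact min_le_right _ _
            _ ≤ (m/2) ^ s * ‖ξ‖ ^ s := by
              gcongr
              rw [← Real.rpow_natCast]
              exact Real.rpow_le_rpow_of_exponent_ge (by positivity) hm2 (by push_cast; linarith)
            _ = (m / 2 * ‖ξ‖) ^ s := by rw [Real.mul_rpow (by positivity) (by positivity)]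
            _ ≤ _ := by gcongr
    _ ≤ _ := setLIntegral_le_lintegral _ _

end

section
open MeasureTheory Real Filter Metric Set
open scoped RealInnerProductSpace Topology

lemma charfn_isU {φ : E3 → ℂ} (h : IsCharFn φ) : ∃ G, IsU G (fun ξ => 1 - ‖φ ξ‖ ^ 2) := by
  obtain ⟨Ψ, hΨ, rfl⟩ := h
  exact ⟨_, isU_of_charFn hΨ⟩

lemma charfn_norm_le {φ : E3 → ℂ} (h : IsCharFn φ) (ξ : E3) : ‖φ ξ‖ ≤ 1 := by
  obtain ⟨G, hG⟩ := charfn_isU h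
  have := hG.nonneg ξ
  nlinarith [norm_nonneg (φ ξ)]

def Lam (b : ℝ → ℝ) (e : E3) : ENNReal :=
  ∫⁻ σ : sphere (0:E3) 1, ENNReal.ofReal (b ⟪e, (σ : E3)⟫ * (1 - ⟪e, (σ : E3)⟫ ^ 2)) ∂sphμ

lemma Lam_eq (b : ℝ → ℝ) (hb : Measurable b) (e e' : E3) (he : ‖e‖ = 1) (he' : ‖e'‖ = 1) :
    Lam b e = Lam b e' := by
  set R := (ℝ ∙ (e - e'))ᗮ.reflection with hR
  have hRe : R e = e' := by rw [hR]; exact Submodule.reflection_sub (by rw [he, he'])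
  rw [Lam, Lam, ← lintegral_rotS R (fun σ : sphere (0:E3) 1 =>
    ENNReal.ofReal (b ⟪e', (σ : E3)⟫ * (1 - ⟪e', (σ : E3)⟫ ^ 2))) (by fun_prop)]
  refine lintegral_congr fun σ => ?_
  simp only [rotS_coe]
  rw [← hRe, R.inner_map_map]

section geom
variable (ξ e : E3) (he : ‖e‖ = 1) (hξ : ξ = ‖ξ‖ • e) (σ : sphere (0:E3) 1)

lemma p_mem (e : E3) (he : ‖e‖ = 1) (σ : sphere (0:E3) 1) : |⟪e, (σ : E3)⟫| ≤ 1 := by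
  have := abs_real_inner_le_norm e (σ : E3)
  simpa [he] using this

lemma inner_eq (ξ e : E3) (hξ : ξ = ‖ξ‖ • e) (h0 : ξ ≠ 0) (σ : sphere (0:E3) 1) :
    ⟪ξ, (σ : E3)⟫ / ‖ξ‖ = ⟪e, (σ : E3)⟫ := by
  have : ‖ξ‖ ≠ 0 := norm_ne_zero_iff.2 h0
  nth_rewrite 1 [hξ]
  rw [real_inner_smul_left]; field_simp

lemma inner_eq' (ξ e : E3) (hξ : ξ = ‖ξ‖ • e) (σ : sphere (0:E3) 1) :
    ⟪ξ, (σ : E3)⟫ = ‖ξ‖ * ⟪e, (σ : E3)⟫ := by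
  nth_rewrite 1 [hξ]
  rw [real_inner_smul_left]

lemma normsq_plus (ξ e : E3) (hξ : ξ = ‖ξ‖ • e) (σ : sphere (0:E3) 1) :
    ‖xiPlus ξ σ‖ ^ 2 = ‖ξ‖ ^ 2 * ((1 + ⟪e, (σ : E3)⟫) / 2) := by
  rw [xiPlus, norm_add_sq_real, norm_smul, norm_smul, real_inner_smul_left, real_inner_smul_right,
    inner_eq' ξ e hξ σ]
  simp only [norm_eq_of_mem_sphere, Real.norm_eq_abs, mul_pow, sq_abs]
  ring

lemma normsq_minus (ξ e : E3) (hξ : ξ = ‖ξ‖ • e) (σ : sphere (0:E3) 1) :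
    ‖xiMinus ξ σ‖ ^ 2 = ‖ξ‖ ^ 2 * ((1 - ⟪e, (σ : E3)⟫) / 2) := by
  rw [xiMinus, norm_sub_sq_real, norm_smul, norm_smul, real_inner_smul_left, real_inner_smul_right,
    inner_eq' ξ e hξ σ]
  simp only [norm_eq_of_mem_sphere, Real.norm_eq_abs, mul_pow, sq_abs]
  ring

lemma exists_dir (ξ : E3) (h0 : ξ ≠ 0) : ∃ e : E3, ‖e‖ = 1 ∧ ξ = ‖ξ‖ • e := by
  have : ‖ξ‖ ≠ 0 := norm_ne_zero_iff.2 h0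
  refine ⟨‖ξ‖⁻¹ • ξ, by simp [norm_smul, this], by rw [smul_smul, mul_inv_cancel₀ this, one_smul]⟩

lemma cap_p (e : E3) (he : ‖e‖ = 1) (σ : sphere (0:E3) 1) (h : ‖(σ : E3) - e‖ < 1) :
    0 ≤ ⟪e, (σ : E3)⟫ := by
  have h1 : ‖(σ : E3) - e‖ ^ 2 = 2 - 2 * ⟪e, (σ : E3)⟫ := by
    rw [norm_sub_sq_real, he, real_inner_comm]; simp; ring
  nlinarith [norm_nonneg ((σ : E3) - e)]
end geom

/-- The barrier as a function of `x = |ξ|^2`. -/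
def Bf (ε c δ τ x : ℝ) : ℝ := Real.exp (ε * (1 + τ) + ε * x - c * τ * Real.log (1 + δ * x))

lemma pow_one_add_le (k : ℕ) (z : ℝ) (h0 : 0 ≤ z) (h1 : z ≤ 1) : (1 + z) ^ k ≤ 1 + 2 ^ k * z := by
  have key : (1 + z) ^ k ≤ 1 + (2 ^ k - 1) * z := by
    induction k with
    | zero => simp
    | succ k ih =>
      have h2 : (0:ℝ) ≤ 2 ^ k - 1 := sub_nonneg.2 (one_le_pow₀ (by norm_num))
      rw [pow_succ, pow_succ]
      calc (1 + z) ^ k * (1 + z) ≤ (1 + (2 ^ k - 1) * z) * (1 + z) := by gcongr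
        _ ≤ _ := by nlinarith [mul_nonneg h2 (mul_nonneg h0 (sub_nonneg.2 h1))]
  linarith

lemma Bf_ratio (ε c δ τ x q : ℝ) (k : ℕ) (hε : 0 ≤ ε) (hδ : 0 ≤ δ) (hx : 0 ≤ x)
    (hc0 : 0 ≤ c * τ) (hck : c * τ ≤ k) (hq0 : 0 ≤ q) (hq1 : q ≤ 1) :
    Bf ε c δ τ (x * ((1 + q) / 2)) ≤
      Bf ε c δ τ x * (1 + 2 ^ k * (2 * Real.log (1 + δ * x)) * (1 - q ^ 2)) := by
  set X := δ * x with hX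
  have hX0 : 0 ≤ X := by positivity
  set Y := X * ((1 + q) / 2) with hY
  have hY0 : 0 ≤ Y := by positivity
  have hYX : Y ≤ X := by rw [hY]; nlinarith
  set z := X * ((1 - q) / 2) / (1 + Y) with hz
  have hq1' : 0 ≤ 1 - q := by linarith
  have hz0 : 0 ≤ z := by positivity
  have hlog : 0 ≤ Real.log (1 + X) := Real.log_nonneg (by linarith)
  have hratio : (1 + X) / (1 + Y) = 1 + z := by
    rw [hz]; field_simp; rw [hY]; ring
  have hzb : z ≤ (1 - q) * (X / (1 + X)) := by
    have h1 : (1 + X) / 2 ≤ 1 + Y := by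
      have := mul_nonneg hX0 hq0
      rw [hY]; linarith
    rw [hz, ← mul_div_assoc (1 - q), div_le_div_iff₀ (by positivity) (by positivity)]
    have := mul_le_mul_of_nonneg_left h1 (mul_nonneg hX0 hq1')
    linarith
  have hXX : X / (1 + X) ≤ 1 := by rw [div_le_one (by positivity)]; linarith
  have hXL : X / (1 + X) ≤ Real.log (1 + X) := by
    have := Real.one_sub_inv_le_log_of_pos (x := 1 + X) (by positivity)
    refine le_trans (le_of_eq ?_) this
    field_simp; ring
  have hXp : 0 ≤ X / (1 + X) := by positivity
  have hz1 : z ≤ 1 := by nlinarith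
  have hzc : 2 ^ k * z ≤ 2 ^ k * (2 * Real.log (1 + X)) * (1 - q ^ 2) := by
    rw [mul_assoc]
    apply mul_le_mul_of_nonneg_left _ (by positivity)
    calc z ≤ (1 - q) * (X / (1 + X)) := hzb
      _ ≤ (1 - q) * Real.log (1 + X) := by gcongr
      _ ≤ _ := by nlinarith [mul_nonneg hq1' hlog, mul_nonneg (mul_nonneg hq1' hlog) hq0]
  have hexp : Bf ε c δ τ (x * ((1 + q) / 2)) ≤ Bf ε c δ τ x * (1 + z) ^ k := by
    rw [← hratio, ← Real.exp_log (x := ((1 + X) / (1 + Y)) ^ k) (by positivity), Bf, Bf,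
      ← Real.exp_add]
    apply Real.exp_le_exp.2
    rw [Real.log_pow, Real.log_div (by positivity) (by positivity)]
    have e1 : δ * (x * ((1 + q) / 2)) = Y := by rw [hY, hX]; ring
    rw [e1, ← hX]
    have h1 : Real.log (1 + Y) ≤ Real.log (1 + X) := Real.log_le_log (by positivity) (by linarith)
    have h2 : x * ((1 + q) / 2) ≤ x := by nlinarith
    have h3 := mul_le_mul_of_nonneg_left h2 hε
    have h4 := mul_le_mul_of_nonneg_right hck (sub_nonneg.2 h1)
    linarith
  refine hexp.trans ?_
  apply mul_le_mul_of_nonneg_left _ (Real.exp_pos _).le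
  linarith [pow_one_add_le k z hz0 hz1]

lemma Bf_large (ε c δ t : ℝ) (hε : 0 < ε) (hδ : 0 < δ) (hc : 0 < c) (ht : 0 < t) :
    ∃ R : ℝ, ∀ τ x : ℝ, 0 ≤ τ → τ ≤ t → 0 ≤ x → Bf ε c δ τ x ≤ 1 → x ≤ R := by
  set l := ε / (2 * (c * t) * δ) with hl
  have hl0 : 0 < l := by positivity
  refine ⟨2 * (c * t * (l + |Real.log l|)) / ε, fun τ x h0 h1 hx hB => ?_⟩
  rw [Bf, Real.exp_le_one_iff] at hB
  have h2 : Real.log (1 + δ * x) ≤ l * (1 + δ * x) + |Real.log l| := by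
    have h3 := Real.log_le_sub_one_of_pos (x := l * (1 + δ * x)) (by positivity)
    rw [Real.log_mul (by positivity) (by positivity)] at h3
    linarith [neg_abs_le (Real.log l)]
  have hlog : 0 ≤ Real.log (1 + δ * x) := Real.log_nonneg (by nlinarith [mul_nonneg hδ.le hx])
  have h4 : c * τ * Real.log (1 + δ * x) ≤ c * t * (l * (1 + δ * x) + |Real.log l|) := by
    calc _ ≤ c * t * Real.log (1 + δ * x) := by gcongr
      _ ≤ _ := by gcongr
  have h5 : c * t * (l * (δ * x)) = ε * x / 2 := by rw [hl]; field_simp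
  have h6 : 0 ≤ ε * (1 + τ) := by positivity
  rw [le_div_iff₀ hε]
  nlinarith

lemma deriv_nonneg_of_left (w : ℝ → ℝ) (a w' : ℝ) (ha : 0 < a) (h : HasDerivWithinAt w w' (Ici 0) a)
    (hle : ∀ τ, 0 ≤ τ → τ < a → w τ ≤ w a) : 0 ≤ w' := by
  have h1 : HasDerivAt w w' a := h.hasDerivAt (Ici_mem_nhds ha)
  have h2 := h1.hasDerivWithinAt (s := Iio a)
  rw [hasDerivWithinAt_iff_tendsto_slope' (by simp)] at h2
  refine ge_of_tendsto h2 ?_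
  filter_upwards [Ioo_mem_nhdsLT ha] with τ hτ
  rw [slope_def_field]
  exact div_nonneg_of_nonpos (by linarith [hle τ hτ.1.le hτ.2]) (by linarith [hτ.2])

lemma delta_choice (s κ C : ℝ) (hs0 : 0 < s) (hs1 : s < 1) (hκ : 0 < κ) (hC : 0 < C) :
    ∃ δ > 0, ∀ r : ℝ, 0 ≤ r → C * Real.log (1 + δ * r ^ 2) ≤ κ * min (r ^ 2) (r ^ s) := by
  set δ := min (κ / C) ((κ * s / (2 * C)) ^ (2 / s)) with hδ
  have hδ0 : 0 < δ := by positivity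
  refine ⟨δ, hδ0, fun r hr => ?_⟩
  rw [mul_min_of_nonneg _ _ hκ.le]
  apply le_min
  · have h1 : Real.log (1 + δ * r ^ 2) ≤ δ * r ^ 2 := by
      linarith [Real.log_le_sub_one_of_pos (x := 1 + δ * r ^ 2) (by positivity)]
    have h2 : C * δ ≤ κ := by
      calc C * δ ≤ C * (κ / C) := by gcongr; exact min_le_left _ _
        _ = κ := by field_simp
    calc _ ≤ C * (δ * r ^ 2) := by gcongr
      _ = C * δ * r ^ 2 := by ring
      _ ≤ _ := by gcongr
  · -- log (1+y) ≤ (2/s) y^{s/2}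
    have hy : 0 ≤ δ * r ^ 2 := by positivity
    have h1 : s / 2 * Real.log (1 + δ * r ^ 2) ≤ (δ * r ^ 2) ^ (s / 2) := by
      rw [← Real.log_rpow (by positivity)]
      have h2 := Real.rpow_add_le_add_rpow (p := s / 2) zero_le_one hy (by positivity) (by linarith)
      rw [Real.one_rpow] at h2
      have h3 := Real.log_le_sub_one_of_pos (x := (1 + δ * r ^ 2) ^ (s / 2)) (by positivity)
      linarith
    have h4 : (δ * r ^ 2) ^ (s / 2) = δ ^ (s / 2) * r ^ s := by
      rw [Real.mul_rpow hδ0.le (by positivity), ← Real.rpow_natCast r 2, ← Real.rpow_mul hr]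
      congr 2; push_cast; ring
    have h5 : δ ^ (s / 2) ≤ κ * s / (2 * C) := by
      calc δ ^ (s / 2) ≤ ((κ * s / (2 * C)) ^ (2 / s)) ^ (s / 2) := by
            gcongr; exact min_le_right _ _
        _ = κ * s / (2 * C) := by
            rw [← Real.rpow_mul (by positivity)]
            have : 2 / s * (s / 2) = 1 := by field_simp
            rw [this, Real.rpow_one]
    calc C * Real.log (1 + δ * r ^ 2) = 2 * C / s * (s / 2 * Real.log (1 + δ * r ^ 2)) := by
          field_simp
      _ ≤ 2 * C / s * (κ * s / (2 * C) * r ^ s) := by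
          rw [h4] at h1
          refine mul_le_mul_of_nonneg_left ?_ (by positivity)
          exact h1.trans (by gcongr)
      _ = κ * r ^ s := by field_simp

end

section
open MeasureTheory Real Filter Metric Set
open scoped RealInnerProductSpace Topology

lemma scalar_point (φp φm φ0 : ℂ) (bb D : ℝ) (hbb : 0 ≤ bb) (hD : 0 ≤ D) (h0 : 0 < ‖φ0‖)
    (hp : ‖φp‖ ≤ ‖φ0‖ * (1 + D)) (hm : ‖φm‖ ≤ 1) :
    bb * (1 - ‖φm‖ ^ 2) ≤
      2 * (bb * D - (starRingEnd ℂ φ0 * ((bb : ℂ) * (φp * φm - φ0))).re / ‖φ0‖ ^ 2) := by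
  have h1 : (starRingEnd ℂ φ0 * ((bb : ℂ) * (φp * φm - φ0))).re =
      bb * ((starRingEnd ℂ φ0 * (φp * φm)).re - ‖φ0‖ ^ 2) := by
    have h2 : starRingEnd ℂ φ0 * ((bb : ℂ) * (φp * φm - φ0)) =
        (bb : ℂ) * (starRingEnd ℂ φ0 * (φp * φm) - starRingEnd ℂ φ0 * φ0) := by ring
    rw [h2, Complex.re_ofReal_mul, Complex.sub_re, Complex.conj_mul', ]
    norm_cast
  have h3 : (starRingEnd ℂ φ0 * (φp * φm)).re ≤ ‖φ0‖ ^ 2 * ((1 + D) * ‖φm‖) := by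
    refine (Complex.re_le_norm _).trans ?_
    rw [norm_mul, norm_mul, RCLike.norm_conj]
    calc ‖φ0‖ * (‖φp‖ * ‖φm‖) ≤ ‖φ0‖ * ((‖φ0‖ * (1 + D)) * ‖φm‖) := by gcongr
      _ = _ := by ring
  have h4 : (starRingEnd ℂ φ0 * ((bb : ℂ) * (φp * φm - φ0))).re / ‖φ0‖ ^ 2 ≤
      bb * ((1 + D) * ‖φm‖ - 1) := by
    rw [h1, div_le_iff₀ (by positivity)]
    calc _ ≤ bb * (‖φ0‖ ^ 2 * ((1 + D) * ‖φm‖) - ‖φ0‖ ^ 2) := by gcongr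
      _ = _ := by ring
  have h5 : (1 + D) * ‖φm‖ - 1 ≤ D - (1 - ‖φm‖ ^ 2) / 2 := by
    nlinarith [norm_nonneg φm, sq_nonneg (1 - ‖φm‖)]
  have := mul_le_mul_of_nonneg_left h5 hbb
  linarith

lemma touch (b : ℝ → ℝ) (hb_meas : Measurable b) (hb_nonneg : ∀ x, 0 ≤ b x) (s κ : ℝ)
    (ψ : ℝ → E3 → ℂ) (τ : ℝ) (hφ : ∀ ξ, ‖ψ τ ξ‖ ≤ 1)
    (hcoer : ∀ ξ e : E3, ‖e‖ = 1 → ξ = ‖ξ‖ • e →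
      ENNReal.ofReal (κ * min (‖ξ‖ ^ 2) (‖ξ‖ ^ s)) ≤
      ∫⁻ σ : sphere (0 : E3) 1, ENNReal.ofReal
        (if ‖(σ : E3) - e‖ < 1 then b ⟪e, (σ : E3)⟫ * (1 - ‖ψ τ (xiMinus ξ σ)‖ ^ 2) else 0) ∂sphμ)
    (hκ : 0 < κ)
    (hInt : ∀ ξ, Integrable (bobylevIntegrand b ψ τ ξ) sphμ)
    (ε c δ : ℝ) (k : ℕ) (hε : 0 ≤ ε) (hδ : 0 ≤ δ) (hc0 : 0 ≤ c * τ) (hck : c * τ ≤ k)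
    (hle : ∀ ξ, ‖ψ τ ξ‖ ≤ Bf ε c δ τ (‖ξ‖ ^ 2))
    (ξ e : E3) (h0 : ξ ≠ 0) (he : ‖e‖ = 1) (hξ : ξ = ‖ξ‖ • e) (hL : Lam b e < ⊤)
    (heq : ‖ψ τ ξ‖ = Bf ε c δ τ (‖ξ‖ ^ 2)) :
    κ * min (‖ξ‖ ^ 2) (‖ξ‖ ^ s) ≤ 2 * (2 ^ k * (2 * Real.log (1 + δ * ‖ξ‖ ^ 2)) * (Lam b e).toReal -
      (starRingEnd ℂ (ψ τ ξ) * ∫ σ, bobylevIntegrand b ψ τ ξ σ ∂sphμ).re / ‖ψ τ ξ‖ ^ 2) := by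
  set h := Real.log (1 + δ * ‖ξ‖ ^ 2) with hh
  have hh0 : 0 ≤ h := Real.log_nonneg (by have := mul_nonneg hδ (sq_nonneg ‖ξ‖); linarith)
  have hξp : 0 < ‖ξ‖ := norm_pos_iff.2 h0
  have hψp : 0 < ‖ψ τ ξ‖ := by rw [heq]; exact Real.exp_pos _
  have hp1 : ∀ σ : sphere (0:E3) 1, 0 ≤ 1 - ⟪e, (σ : E3)⟫ ^ 2 := fun σ => by
    have := (sq_le_one_iff_abs_le_one _).2 (p_mem e he σ); linarith
  set l : sphere (0:E3) 1 → ℝ := fun σ => b ⟪e, (σ : E3)⟫ * (1 - ⟪e, (σ : E3)⟫ ^ 2) with hl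
  have hl0 : ∀ σ, 0 ≤ l σ := fun σ => mul_nonneg (hb_nonneg _) (hp1 σ)
  have hlm : Measurable l := by simp only [hl]; fun_prop
  have hli : Integrable l sphμ := by
    refine ⟨hlm.aestronglyMeasurable, ?_⟩
    rw [hasFiniteIntegral_iff_ofReal (ae_of_all _ hl0)]
    exact hL
  have hlI : ∫ σ, l σ ∂sphμ = (Lam b e).toReal := by
    rw [integral_eq_lintegral_of_nonneg_ae (ae_of_all _ hl0) hlm.aestronglyMeasurable]; rfl
  set g : sphere (0:E3) 1 → ℂ := fun σ => starRingEnd ℂ (ψ τ ξ) * bobylevIntegrand b ψ τ ξ σ with hg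
  have hgi : Integrable g sphμ := (hInt ξ).const_mul _
  have hgre : Integrable (fun σ => (g σ).re) sphμ := hgi.re
  set J : sphere (0:E3) 1 → ℝ := fun σ => 2 * (2 ^ k * (2 * h) * l σ - (g σ).re / ‖ψ τ ξ‖ ^ 2) with hJ
  have hJi : Integrable J sphμ := ((hli.const_mul _).sub (hgre.div_const _)).const_mul _
  have hJI : ∫ σ, J σ ∂sphμ = 2 * (2 ^ k * (2 * h) * (Lam b e).toReal -
      (starRingEnd ℂ (ψ τ ξ) * ∫ σ, bobylevIntegrand b ψ τ ξ σ ∂sphμ).re / ‖ψ τ ξ‖ ^ 2) := by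
    simp only [hJ]
    rw [integral_const_mul, integral_sub (hli.const_mul _) (hgre.div_const _), integral_const_mul,
      hlI, integral_div]
    have : ∫ σ, (g σ).re ∂sphμ = (∫ σ, g σ ∂sphμ).re := integral_re hgi
    rw [this]; simp only [hg]; rw [integral_const_mul]
  have hpt : ∀ σ : sphere (0:E3) 1, (if ‖(σ : E3) - e‖ < 1 then
      b ⟪e, (σ : E3)⟫ * (1 - ‖ψ τ (xiMinus ξ σ)‖ ^ 2) else 0) ≤ J σ ∧ 0 ≤ J σ := by
    intro σ
    set p := ⟪e, (σ : E3)⟫ with hp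
    obtain ⟨hpl, hpu⟩ := abs_le.1 (p_mem e he σ)
    have hD : 0 ≤ 2 ^ k * (2 * h) * (1 - p ^ 2) := mul_nonneg (by positivity) (hp1 σ)
    have hu : ∀ z, 0 ≤ b p * (1 - ‖ψ τ z‖ ^ 2) := fun z =>
      mul_nonneg (hb_nonneg _) (by nlinarith [hφ z, norm_nonneg (ψ τ z)])
    rcases le_or_gt 0 p with hp0 | hp0
    · have h1 : ‖ψ τ (xiPlus ξ σ)‖ ≤ ‖ψ τ ξ‖ * (1 + 2 ^ k * (2 * h) * (1 - p ^ 2)) := by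
        refine (hle _).trans ?_
        rw [normsq_plus ξ e hξ σ, heq]
        exact Bf_ratio ε c δ τ _ p k hε hδ (by positivity) hc0 hck hp0 hpu
      have h2 := scalar_point _ _ _ (b p) _ (hb_nonneg _) hD hψp h1 (hφ (xiMinus ξ σ))
      have h3 : J σ = 2 * (b p * (2 ^ k * (2 * h) * (1 - p ^ 2)) - (starRingEnd ℂ (ψ τ ξ) * ((b p : ℂ) *
          (ψ τ (xiPlus ξ σ) * ψ τ (xiMinus ξ σ) - ψ τ ξ))).re / ‖ψ τ ξ‖ ^ 2) := by
        simp only [hJ, hl, hg, bobylevIntegrand, inner_eq ξ e hξ h0 σ, ← hp]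
        ring
      rw [← h3] at h2
      have h4 := hu (xiMinus ξ σ)
      refine ⟨?_, h4.trans h2⟩
      split_ifs
      · exact h2
      · exact h4.trans h2
    · have h1 : ‖ψ τ (xiMinus ξ σ)‖ ≤ ‖ψ τ ξ‖ * (1 + 2 ^ k * (2 * h) * (1 - p ^ 2)) := by
        refine (hle _).trans ?_
        rw [normsq_minus ξ e hξ σ, heq]
        have := Bf_ratio ε c δ τ (‖ξ‖ ^ 2) (-p) k hε hδ (by positivity) hc0 hck (by linarith) (by linarith)
        rw [neg_sq] at this
        exact this
      have h2 := scalar_point _ _ _ (b p) _ (hb_nonneg _) hD hψp h1 (hφ (xiPlus ξ σ))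
      have h3 : J σ = 2 * (b p * (2 ^ k * (2 * h) * (1 - p ^ 2)) - (starRingEnd ℂ (ψ τ ξ) * ((b p : ℂ) *
          (ψ τ (xiMinus ξ σ) * ψ τ (xiPlus ξ σ) - ψ τ ξ))).re / ‖ψ τ ξ‖ ^ 2) := by
        simp only [hJ, hl, hg, bobylevIntegrand, inner_eq ξ e hξ h0 σ, ← hp]
        rw [mul_comm (ψ τ (xiMinus ξ σ))]
        ring
      rw [← h3] at h2
      have h4 := (hu (xiPlus ξ σ)).trans h2
      refine ⟨?_, h4⟩
      rw [if_neg]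
      · exact h4
      · intro hcap
        exact absurd (cap_p e he σ hcap) (not_le.2 hp0)
  have hfin := (hcoer ξ e he hξ).trans (lintegral_mono fun σ => ENNReal.ofReal_le_ofReal (hpt σ).1)
  rw [← ofReal_integral_eq_lintegral_ofReal hJi (ae_of_all _ fun σ => (hpt σ).2), hJI] at hfin
  have hpos : 0 < κ * min (‖ξ‖ ^ 2) (‖ξ‖ ^ s) := by positivity
  by_contra hcon
  rw [not_le] at hcon
  exact absurd hfin (not_le.2 ((ENNReal.ofReal_lt_ofReal_iff hpos).2 hcon))

end

section
open MeasureTheory Real Filter Metric Set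
open scoped RealInnerProductSpace Topology

lemma caseI_eps (b : ℝ → ℝ) (hb_meas : Measurable b) (hb_nonneg : ∀ x, 0 ≤ b x) (s κ : ℝ)
    (ψ : ℝ → E3 → ℂ) (ψ₀ : E3 → ℂ) (hψ : IsBobylevSolution b ψ ψ₀) (t : ℝ) (ht : 0 < t)
    (hcoer : ∀ τ, 0 ≤ τ → τ ≤ t → ∀ ξ e : E3, ‖e‖ = 1 → ξ = ‖ξ‖ • e →
      ENNReal.ofReal (κ * min (‖ξ‖ ^ 2) (‖ξ‖ ^ s)) ≤
      ∫⁻ σ : sphere (0 : E3) 1, ENNReal.ofReal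
        (if ‖(σ : E3) - e‖ < 1 then b ⟪e, (σ : E3)⟫ * (1 - ‖ψ τ (xiMinus ξ σ)‖ ^ 2) else 0) ∂sphμ)
    (hκ : 0 < κ) (Λ : ℝ) (hΛ : ∀ e : E3, ‖e‖ = 1 → Lam b e < ⊤ ∧ (Lam b e).toReal = Λ)
    (ε c δ : ℝ) (k : ℕ) (hε : 0 < ε) (hδ : 0 < δ) (hc : 0 < c) (hck : c * t = k)
    (hδκ : ∀ r : ℝ, 0 ≤ r → 2 * (2 ^ k * 2 * Λ + c) * Real.log (1 + δ * r ^ 2) ≤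
      κ * min (r ^ 2) (r ^ s)) :
    ∀ ξ, ‖ψ t ξ‖ ≤ Bf ε c δ t (‖ξ‖ ^ 2) := by
  have hφ : ∀ τ, 0 ≤ τ → ∀ ξ, ‖ψ τ ξ‖ ≤ 1 := fun τ h ξ => charfn_norm_le (hψ.isCharFn τ h) ξ
  set Z : Set (ℝ × E3) := {p | p ∈ Icc (0:ℝ) t ×ˢ univ ∧ Bf ε c δ p.1 (‖p.2‖ ^ 2) ≤ ‖ψ p.1 p.2‖} with hZ
  by_contra hcon
  push Not at hcon
  obtain ⟨ξ₁, hξ₁⟩ := hcon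
  have hZne : Z.Nonempty := ⟨(t, ξ₁), ⟨⟨⟨ht.le, le_rfl⟩, mem_univ _⟩, hξ₁.le⟩⟩
  have hBc : ContinuousOn (fun p : ℝ × E3 => Bf ε c δ p.1 (‖p.2‖ ^ 2)) univ := by
    unfold Bf
    apply Continuous.continuousOn
    apply Real.continuous_exp.comp
    have : Continuous (fun p : ℝ × E3 => Real.log (1 + δ * ‖p.2‖ ^ 2)) :=
      Continuous.log (by fun_prop) (fun p => by positivity)
    fun_prop
  have hψc : ContinuousOn (fun p : ℝ × E3 => ‖ψ p.1 p.2‖) (Icc (0:ℝ) t ×ˢ univ) :=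
    (hψ.cont.mono (prod_mono Icc_subset_Ici_self le_rfl)).norm
  have hZc : IsClosed Z := by
    have := IsClosed.isClosed_le (isClosed_Icc.prod isClosed_univ) (hBc.mono (subset_univ _)) hψc
    exact this
  obtain ⟨R, hR⟩ := Bf_large ε c δ t hε hδ hc ht
  have hZK : IsCompact Z := by
    refine (isCompact_Icc (a := (0:ℝ)) (b := t)).prod (isCompact_closedBall (0:E3) (Real.sqrt R))
      |>.of_isClosed_subset hZc ?_
    rintro ⟨τ, ξ⟩ ⟨⟨h1, -⟩, h2⟩
    refine ⟨h1, ?_⟩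
    rw [mem_closedBall_zero_iff]
    exact Real.le_sqrt_of_sq_le (hR τ _ h1.1 h1.2 (by positivity) (h2.trans (hφ τ h1.1 ξ)))
  obtain ⟨⟨τ, ξ⟩, ⟨⟨hτ, -⟩, hge⟩, hmin⟩ := hZK.exists_isMinOn hZne (f := fun p => p.1)
    continuous_fst.continuousOn
  simp only at hτ hge
  have hlt : ∀ τ', 0 ≤ τ' → τ' < τ → ∀ ξ', ‖ψ τ' ξ'‖ < Bf ε c δ τ' (‖ξ'‖ ^ 2) := by
    intro τ' h1 h2 ξ'
    by_contra h3
    rw [not_lt] at h3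
    have := hmin (show ((τ', ξ') : ℝ × E3) ∈ Z from ⟨⟨⟨h1, h2.le.trans hτ.2⟩, mem_univ _⟩, h3⟩)
    simp only [mem_ofPred_eq] at this
    linarith
  have hτ0 : 0 < τ := by
    rcases hτ.1.eq_or_lt with h | h
    · exfalso
      rw [← h] at hge
      have h1 := hge.trans (hφ 0 le_rfl ξ)
      rw [Bf, Real.exp_le_one_iff] at h1
      nlinarith [sq_nonneg ‖ξ‖, mul_nonneg hε.le (sq_nonneg ‖ξ‖)]
    · exact h
  have hle : ∀ ξ', ‖ψ τ ξ'‖ ≤ Bf ε c δ τ (‖ξ'‖ ^ 2) := by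
    intro ξ'
    have h1 : Tendsto (fun τ' => ‖ψ τ' ξ'‖) (𝓝[<] τ) (𝓝 ‖ψ τ ξ'‖) := by
      have h2 := ((hψ.eq τ hτ.1 ξ').continuousWithinAt.norm).continuousAt (Ici_mem_nhds hτ0)
      exact h2.tendsto.mono_left nhdsWithin_le_nhds
    have h3 : Tendsto (fun τ' => Bf ε c δ τ' (‖ξ'‖ ^ 2)) (𝓝[<] τ) (𝓝 (Bf ε c δ τ (‖ξ'‖ ^ 2))) := by
      have h2 : Continuous (fun τ' => Bf ε c δ τ' (‖ξ'‖ ^ 2)) := by unfold Bf; fun_prop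
      exact h2.continuousAt.tendsto.mono_left nhdsWithin_le_nhds
    refine le_of_tendsto_of_tendsto h1 h3 ?_
    filter_upwards [Ioo_mem_nhdsLT hτ0] with τ' hτ'
    exact (hlt τ' hτ'.1.le hτ'.2 ξ').le
  have heq := le_antisymm (hle ξ) hge
  have hξ0 : ξ ≠ 0 := by
    rintro rfl
    have h1 := hge.trans (hφ τ hτ.1 0)
    rw [Bf, Real.exp_le_one_iff] at h1
    simp at h1
    nlinarith
  obtain ⟨e, he, hξe⟩ := exists_dir ξ hξ0
  have hctk : c * τ ≤ k := by rw [← hck]; gcongr; exact hτ.2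
  have htouch := touch b hb_meas hb_nonneg s κ ψ τ (hφ τ hτ.1) (hcoer τ hτ.1 hτ.2) hκ
    (hψ.integrable τ hτ.1) ε c δ k hε.le hδ.le (by positivity) hctk hle ξ e hξ0 he hξe (hΛ e he).1 heq
  rw [(hΛ e he).2] at htouch
  set I := ∫ σ, bobylevIntegrand b ψ τ ξ σ ∂sphμ with hI
  set h := Real.log (1 + δ * ‖ξ‖ ^ 2) with hh
  -- derivative
  have hd1 : HasDerivWithinAt (fun τ => ‖ψ τ ξ‖ ^ 2) (2 * (starRingEnd ℂ (ψ τ ξ) * I).re) (Ici 0) τ := by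
    have h1 := (hψ.eq τ hτ.1 ξ).norm_sq
    refine h1.congr_deriv ?_
    rw [Complex.inner, ← hI]
    simp [mul_comm]
  have hd2 : HasDerivWithinAt (fun τ => Bf ε c δ τ (‖ξ‖ ^ 2) ^ 2)
      (2 * Bf ε c δ τ (‖ξ‖ ^ 2) ^ 2 * (ε - c * h)) (Ici 0) τ := by
    have h1 : HasDerivAt (fun τ : ℝ => ε * (1 + τ) + ε * ‖ξ‖ ^ 2 - c * τ * h) (ε - c * h) τ := by
      have h2 := (((hasDerivAt_id τ).const_add 1).const_mul ε).add_const (ε * ‖ξ‖ ^ 2)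
      have h3 := ((hasDerivAt_id τ).const_mul c).mul_const h
      exact (h2.sub h3).congr_deriv (by ring)
    have h4 := (h1.exp.pow 2).hasDerivWithinAt (s := Ici 0)
    refine h4.congr_deriv ?_
    simp only [Bf, ← hh]; push_cast; ring
  have hd := deriv_nonneg_of_left _ τ _ hτ0 (hd1.sub hd2) (by
    intro τ' h1 h2
    have h3 := hlt τ' h1 h2 ξ
    simp only [Pi.sub_apply]
    rw [heq]
    have := pow_le_pow_left₀ (norm_nonneg _) h3.le 2
    linarith)
  have hBp : 0 < ‖ψ τ ξ‖ ^ 2 := by rw [heq]; exact pow_pos (Real.exp_pos _) _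
  rw [← heq] at hd
  have hre : ε - c * h ≤ (starRingEnd ℂ (ψ τ ξ) * I).re / ‖ψ τ ξ‖ ^ 2 := by
    rw [le_div_iff₀ hBp]; linarith
  have := hδκ ‖ξ‖ (norm_nonneg _)
  rw [← hh] at this
  nlinarith

lemma caseI (b : ℝ → ℝ) (hb_meas : Measurable b) (hb_nonneg : ∀ x, 0 ≤ b x) (s κ : ℝ)
    (hs0 : 0 < s) (hs1 : s < 1)
    (ψ : ℝ → E3 → ℂ) (ψ₀ : E3 → ℂ) (hψ : IsBobylevSolution b ψ ψ₀) (t : ℝ) (ht : 0 < t)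
    (hcoer : ∀ τ, 0 ≤ τ → τ ≤ t → ∀ ξ e : E3, ‖e‖ = 1 → ξ = ‖ξ‖ • e →
      ENNReal.ofReal (κ * min (‖ξ‖ ^ 2) (‖ξ‖ ^ s)) ≤
      ∫⁻ σ : sphere (0 : E3) 1, ENNReal.ofReal
        (if ‖(σ : E3) - e‖ < 1 then b ⟪e, (σ : E3)⟫ * (1 - ‖ψ τ (xiMinus ξ σ)‖ ^ 2) else 0) ∂sphμ)
    (hκ : 0 < κ) (e₀ : E3) (he₀ : ‖e₀‖ = 1) (hL : Lam b e₀ < ⊤) (k : ℕ) (hk : 0 < k) :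
    ∃ δ > 0, ∀ ξ, ‖ψ t ξ‖ ^ 2 ≤ ((1 + δ * ‖ξ‖ ^ 2) ^ k)⁻¹ := by
  set Λ := (Lam b e₀).toReal with hΛ
  have hΛ0 : 0 ≤ Λ := ENNReal.toReal_nonneg
  have hk' : (0:ℝ) < k := by exact_mod_cast hk
  set c : ℝ := k / t with hc
  have hc0 : 0 < c := by positivity
  have hck : c * t = k := by rw [hc]; field_simp
  obtain ⟨δ, hδ, hδκ⟩ := delta_choice s κ (2 * (2 ^ k * 2 * Λ + c)) hs0 hs1 hκ (by positivity)
  refine ⟨δ, hδ, fun ξ => ?_⟩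
  have h1 : ∀ ε > 0, ‖ψ t ξ‖ ≤ Bf ε c δ t (‖ξ‖ ^ 2) := fun ε hε =>
    caseI_eps b hb_meas hb_nonneg s κ ψ ψ₀ hψ t ht hcoer hκ Λ
      (fun e he => by rw [Lam_eq b hb_meas e e₀ he he₀]; exact ⟨hL, rfl⟩) ε c δ k hε hδ hc0 hck hδκ ξ
  have h2 : ‖ψ t ξ‖ ≤ Bf 0 c δ t (‖ξ‖ ^ 2) := by
    have h3 : Continuous (fun ε => Bf ε c δ t (‖ξ‖ ^ 2)) := by unfold Bf; fun_prop
    refine ge_of_tendsto ((h3.tendsto 0).mono_left nhdsWithin_le_nhds : Tendsto _ (𝓝[>] (0:ℝ)) _) ?_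
    filter_upwards [self_mem_nhdsWithin] with ε hε
    exact h1 ε hε
  have h4 : Bf 0 c δ t (‖ξ‖ ^ 2) = ((1 + δ * ‖ξ‖ ^ 2) ^ k)⁻¹ := by
    rw [Bf, hck]
    have : (0:ℝ) * (1 + t) + 0 * ‖ξ‖ ^ 2 - k * Real.log (1 + δ * ‖ξ‖ ^ 2) =
      -(Real.log ((1 + δ * ‖ξ‖ ^ 2) ^ k)) := by rw [Real.log_pow]; ring
    rw [this, Real.exp_neg, Real.exp_log (by positivity)]
  rw [h4] at h2
  have h5 := charfn_norm_le (hψ.isCharFn t ht.le) ξ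
  nlinarith [norm_nonneg (ψ t ξ)]

end

section
open MeasureTheory Real Filter Metric Set
open scoped RealInnerProductSpace Topology

lemma compact_alt (v : E3 → ℝ) (hc : Continuous v) (h0 : ∀ x, 0 ≤ v x)
    (hn : ∀ (n : ℕ) x, v ((n : ℝ) • x) ≤ n ^ 2 * v x) (a : E3) :
    (∃ c > 0, ∃ r0 > 0, ∀ ζ : E3, ⟪a, ζ⟫ = 0 → ‖ζ‖ ≤ r0 → c * ‖ζ‖ ^ 2 ≤ v ζ) ∨
    ∃ ω : E3, ⟪a, ω⟫ = 0 ∧ ‖ω‖ = 1 ∧ ∀ s > 0, v ((s : ℝ) • ω) = 0 := by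
  by_contra hcon
  push Not at hcon
  obtain ⟨h1, h2⟩ := hcon
  have h3 : ∀ n : ℕ, ∃ ζ : E3, ⟪a, ζ⟫ = 0 ∧ ‖ζ‖ ≤ 1 / ((n : ℝ) + 1) ∧
      v ζ < 1 / ((n : ℝ) + 1) * ‖ζ‖ ^ 2 := fun n =>
    h1 _ (by positivity) _ (by positivity)
  choose ζ hζa hζn hζv using h3
  have hζ0 : ∀ n, 0 < ‖ζ n‖ := by
    intro n
    rcases (norm_nonneg (ζ n)).eq_or_lt with h | h
    · have := hζv n
      rw [← h] at this
      have := h0 (ζ n)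
      simp at *; linarith
    · exact h
  set w : ℕ → E3 := fun n => ‖ζ n‖⁻¹ • ζ n with hw
  have hwS : ∀ n, w n ∈ sphere (0:E3) 1 := fun n => by
    simp [hw, norm_smul, (hζ0 n).ne']
  obtain ⟨ω, hω, φ, hφ, hlim⟩ := (isCompact_sphere (0:E3) 1).tendsto_subseq hwS
  have hωa : ⟪a, ω⟫ = 0 := by
    have h4 : Tendsto (fun n => ⟪a, (w ∘ φ) n⟫) atTop (𝓝 ⟪a, ω⟫) := tendsto_const_nhds.inner hlim
    have h5 : (fun n => ⟪a, (w ∘ φ) n⟫) = fun _ => (0:ℝ) := by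
      ext n; simp [hw, inner_smul_right, hζa]
    rw [h5] at h4
    exact (tendsto_nhds_unique h4 tendsto_const_nhds)
  obtain ⟨s, hs, hne⟩ := h2 ω hωa (by simpa using hω)
  apply hne
  have hlim1 : Tendsto (fun n : ℕ => 1 / ((φ n : ℝ) + 1)) atTop (𝓝 0) :=
    (tendsto_one_div_add_atTop_nhds_zero_nat (𝕜 := ℝ)).comp hφ.tendsto_atTop
  set m : ℕ → ℝ := fun n => (⌊s / ‖ζ (φ n)‖⌋₊ : ℝ) * ‖ζ (φ n)‖ with hm
  have hm1 : ∀ n, m n ≤ s := fun n => by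
    have := Nat.floor_le (a := s / ‖ζ (φ n)‖) (by positivity)
    calc m n ≤ s / ‖ζ (φ n)‖ * ‖ζ (φ n)‖ := by simp only [hm]; gcongr
      _ = s := by have := (hζ0 (φ n)).ne'; field_simp
  have hm2 : ∀ n, s - 1 / ((φ n : ℝ) + 1) ≤ m n := fun n => by
    have h6 := (Nat.lt_floor_add_one (s / ‖ζ (φ n)‖)).le
    rw [div_le_iff₀ (hζ0 _)] at h6
    have := hζn (φ n)
    simp only [hm]; linarith
  have hmlim : Tendsto m atTop (𝓝 s) := by
    refine tendsto_of_tendsto_of_tendsto_of_le_of_le ?_ tendsto_const_nhds hm2 hm1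
    simpa using (tendsto_const_nhds (x := s)).sub hlim1
  have hvl : Tendsto (fun n => v (m n • w (φ n))) atTop (𝓝 (v (s • ω))) :=
    (hc.tendsto _).comp (hmlim.smul hlim)
  have hvb : ∀ n, v (m n • w (φ n)) ≤ s ^ 2 * (1 / ((φ n : ℝ) + 1)) := by
    intro n
    have h7 : m n • w (φ n) = (⌊s / ‖ζ (φ n)‖⌋₊ : ℝ) • ζ (φ n) := by
      simp only [hm, hw]
      rw [smul_smul, mul_assoc, mul_inv_cancel₀ (hζ0 _).ne', mul_one]
    rw [h7]
    refine (hn _ _).trans ?_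
    have hm0 : 0 ≤ m n := by simp only [hm]; positivity
    calc _ ≤ (⌊s / ‖ζ (φ n)‖⌋₊ : ℝ) ^ 2 * (1 / ((φ n : ℝ) + 1) * ‖ζ (φ n)‖ ^ 2) := by
          gcongr; exact (hζv _).le
      _ = m n ^ 2 * (1 / ((φ n : ℝ) + 1)) := by simp only [hm]; ring
      _ ≤ _ := by gcongr; exact hm1 n
  have := le_of_tendsto_of_tendsto' hvl (hlim1.const_mul (s ^ 2)) hvb
  rw [mul_zero] at this
  exact le_antisymm this (h0 _)

lemma lam_finite (b : ℝ → ℝ) (hb_nonneg : ∀ x, 0 ≤ b x) (ψ : ℝ → E3 → ℂ) (t : ℝ)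
    (ξ e : E3) (h0 : ξ ≠ 0) (hξ : ξ = ‖ξ‖ • e)
    (hInt : Integrable (bobylevIntegrand b ψ t ξ) sphμ) (R : E3 ≃ₗᵢ[ℝ] E3) (hR : R e = e) (C : ℝ)
    (hC : ∀ σ : sphere (0:E3) 1, 1 - ⟪e, (σ : E3)⟫ ^ 2 ≤
      C * (‖ψ t (xiPlus ξ σ) * ψ t (xiMinus ξ σ) - ψ t ξ‖ +
        ‖ψ t (xiPlus ξ (rotS R σ)) * ψ t (xiMinus ξ (rotS R σ)) - ψ t ξ‖)) :
    Lam b e < ⊤ := by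
  have hInt2 : Integrable (bobylevIntegrand b ψ t ξ ∘ rotS R) sphμ :=
    ((measurePreserving_rotS R).integrable_comp hInt.aestronglyMeasurable).2 hInt
  have hJ : Integrable (fun σ => C * (‖bobylevIntegrand b ψ t ξ σ‖ +
      ‖(bobylevIntegrand b ψ t ξ ∘ rotS R) σ‖)) sphμ := (hInt.norm.add hInt2.norm).const_mul _
  refine lt_of_le_of_lt (lintegral_mono fun σ => ENNReal.ofReal_le_ofReal ?_) hJ.lintegral_lt_top
  have h1 : ⟪e, (rotS R σ : E3)⟫ = ⟪e, (σ : E3)⟫ := by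
    rw [rotS_coe]; nth_rewrite 1 [← hR]; rw [R.inner_map_map]
  simp only [Function.comp, bobylevIntegrand, inner_eq ξ e hξ h0, h1, norm_mul, Complex.norm_real,
    Real.norm_eq_abs, abs_of_nonneg (hb_nonneg _)]
  calc _ ≤ b ⟪e, (σ : E3)⟫ * _ := mul_le_mul_of_nonneg_left (hC σ) (hb_nonneg _)
    _ = _ := by ring

/-- a rotation by a quarter turn about `ω`. -/
lemma exists_quarter (ω : E3) (hω : ‖ω‖ = 1) : ∃ R : E3 ≃ₗᵢ[ℝ] E3, R ω = ω ∧
    ∀ ν : E3, ⟪ω, ν⟫ = 0 → ‖ν‖ = 1 → ∀ x : E3, ∃ α β γ : ℝ, x = α • ω + β • ν + γ • R ν := by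
  obtain ⟨B, hB0, -⟩ := exists_frame ω ω hω
  have h01 : ⟪B 0, B 1⟫ = 0 := B.orthonormal.2 (by decide)
  have h02 : ⟪B 0, B 2⟫ = 0 := B.orthonormal.2 (by decide)
  have h12 : ⟪B 1, B 2⟫ = 0 := B.orthonormal.2 (by decide)
  have h21 : ⟪B 2, B 1⟫ = 0 := B.orthonormal.2 (by decide)
  have hn : ∀ i, ‖B i‖ = 1 := fun i => B.orthonormal.1 i
  set S := (ℝ ∙ (B 1 - B 2))ᗮ.reflection with hS
  set T := (ℝ ∙ (B 1))ᗮ.reflection with hT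
  have S1 : S (B 1) = B 2 := Submodule.reflection_sub (by rw [hn, hn])
  have S2 : S (B 2) = B 1 := by rw [← S1, hS, Submodule.reflection_reflection]
  have S0 : S (B 0) = B 0 := by
    rw [hS]
    apply Submodule.reflection_mem_subspace_eq_self
    rw [Submodule.mem_orthogonal_singleton_iff_inner_left, inner_sub_right, h01, h02, sub_zero]
  have T1 : T (B 1) = - B 1 := by
    rw [hT]
    exact Submodule.reflection_orthogonalComplement_singleton_eq_neg _
  have T2 : T (B 2) = B 2 := by
    rw [hT]
    apply Submodule.reflection_mem_subspace_eq_self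
    rw [Submodule.mem_orthogonal_singleton_iff_inner_left, h21]
  have T0 : T (B 0) = B 0 := by
    rw [hT]
    apply Submodule.reflection_mem_subspace_eq_self
    rw [Submodule.mem_orthogonal_singleton_iff_inner_left, h01]
  have R0 : (S.trans T) (B 0) = B 0 := by simp [S0, T0]
  have R1 : (S.trans T) (B 1) = B 2 := by simp [S1, T2]
  have R2 : (S.trans T) (B 2) = -B 1 := by simp [S2, T1]
  refine ⟨S.trans T, by rw [← hB0]; exact R0, fun ν hν hν1 x => ?_⟩
  have hsum : ∀ y : E3, y = ⟪B 0, y⟫ • B 0 + ⟪B 1, y⟫ • B 1 + ⟪B 2, y⟫ • B 2 := fun y => by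
    have := B.sum_repr' y
    rw [Fin.sum_univ_three] at this
    exact this.symm
  rw [← hB0] at hν
  set p := ⟪B 1, ν⟫ with hp
  set q := ⟪B 2, ν⟫ with hq
  have hνe : ν = p • B 1 + q • B 2 := by
    have := hsum ν
    rw [hν, zero_smul, zero_add] at this
    exact this
  have hRν : (S.trans T) ν = p • B 2 - q • B 1 := by
    nth_rewrite 1 [hνe]
    rw [map_add, map_smul, map_smul, R1, R2]; module
  have hpq : p ^ 2 + q ^ 2 = 1 := by
    have := B.sum_sq_norm_inner_right ν
    rw [Fin.sum_univ_three, hν, hν1, ← hp, ← hq] at this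
    simpa using this
  refine ⟨⟪B 0, x⟫, ⟪B 1, x⟫ * p + ⟪B 2, x⟫ * q, ⟪B 2, x⟫ * p - ⟪B 1, x⟫ * q, ?_⟩
  rw [hRν, ← hB0]
  have hx := hsum x
  clear_value p q
  generalize ⟪B 0, x⟫ = x0 at hx ⊢
  generalize ⟪B 1, x⟫ = x1 at hx ⊢
  generalize ⟪B 2, x⟫ = x2 at hx ⊢
  have e1 : x1 • B 1 = (x1 * (p ^ 2 + q ^ 2)) • B 1 := by rw [hpq, mul_one]
  have e2 : x2 • B 2 = (x2 * (p ^ 2 + q ^ 2)) • B 2 := by rw [hpq, mul_one]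
  rw [hνe, hx, e1, e2]
  module

end

section
open MeasureTheory Real Filter Metric Set
open scoped RealInnerProductSpace Topology

lemma near_zero (b : ℝ → ℝ) (hb_nonneg : ∀ x, 0 ≤ b x) (ψ : ℝ → E3 → ℂ) (t : ℝ)
    (hInt : ∀ ξ, Integrable (bobylevIntegrand b ψ t ξ) sphμ)
    (hL : ∀ e : E3, ‖e‖ = 1 → ¬ Lam b e < ⊤)
    (hcf : IsCharFn (ψ t)) (hcont : Continuous (ψ t)) (η : E3) (hη : 0 < 1 - ‖ψ t η‖ ^ 2) :
    ∃ c > 0, ∃ r0 > 0, ∀ ζ : E3, ‖ζ‖ ≤ r0 → c * ‖ζ‖ ^ 2 ≤ 1 - ‖ψ t ζ‖ ^ 2 := by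
  obtain ⟨G, hG⟩ := charfn_isU hcf
  have hle := charfn_norm_le hcf
  set u : E3 → ℝ := fun ξ => 1 - ‖ψ t ξ‖ ^ 2 with hu
  have huc : Continuous u := by simp only [hu]; fun_prop
  rcases compact_alt u huc hG.nonneg hG.nsmul_le 0 with h | ⟨ω, -, hω, hω0⟩
  · obtain ⟨c, hc, r0, hr0, h⟩ := h
    exact ⟨c, hc, r0, hr0, fun ζ hζ => h ζ (by simp) hζ⟩
  exfalso
  have hall : ∀ ν : E3, (∀ s > 0, u ((s:ℝ) • ν) = 0) → ∀ s : ℝ, u (s • ν) = 0 := by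
    intro ν hν s
    rcases lt_trichotomy s 0 with h | h | h
    · rw [← hG.neg, ← neg_smul]; exact hν _ (by linarith)
    · rw [h, zero_smul]; exact hG.zero
    · exact hν s h
  obtain ⟨R, hRω, hspan⟩ := exists_quarter ω hω
  have hadd0 : ∀ x y, u x = 0 → u y = 0 → u (x + y) = 0 := fun x y hx hy =>
    le_antisymm (by have := hG.add_le x y; rw [hx, hy] at this; linarith) (hG.nonneg _)
  rcases compact_alt (fun ζ => u ζ + u (R ζ)) (by fun_prop)
      (fun x => add_nonneg (hG.nonneg _) (hG.nonneg _))
      (fun n x => by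
        have h1 := hG.nsmul_le n x
        have h2 := hG.nsmul_le n (R x)
        simp only [map_smul] at *
        linarith) ω with h | ⟨ν, hων, hν, hν0⟩
  · obtain ⟨c, hc, r0, hr0, h⟩ := h
    have hξn : ‖r0 • ω‖ = r0 := by rw [norm_smul, hω, Real.norm_eq_abs, abs_of_pos hr0, mul_one]
    have hξ0 : r0 • ω ≠ 0 := by rw [← norm_pos_iff, hξn]; exact hr0
    have hψξ : ‖ψ t (r0 • ω)‖ = 1 := by
      have := hall ω hω0 r0
      simp only [hu] at this
      nlinarith [norm_nonneg (ψ t (r0 • ω))]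
    have hum : ∀ σ : sphere (0:E3) 1, u (xiMinus (r0 • ω) σ) ≤
        2 * ‖ψ t (xiPlus (r0 • ω) σ) * ψ t (xiMinus (r0 • ω) σ) - ψ t (r0 • ω)‖ := by
      intro σ
      have h1 := norm_sub_norm_le (ψ t (r0 • ω)) (ψ t (xiPlus (r0 • ω) σ) * ψ t (xiMinus (r0 • ω) σ))
      rw [hψξ, norm_mul, norm_sub_rev] at h1
      have h2 := hle (xiPlus (r0 • ω) σ)
      have h3 := hle (xiMinus (r0 • ω) σ)
      have h4 := norm_nonneg (ψ t (xiMinus (r0 • ω) σ))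
      simp only [hu]
      nlinarith
    have hz : ∀ σ : sphere (0:E3) 1, u ((r0 / 2) • (⟪ω, (σ : E3)⟫ • ω - (σ : E3))) ≤
        2 * u (xiMinus (r0 • ω) σ) := by
      intro σ
      have h1 : (r0 / 2) • (⟪ω, (σ : E3)⟫ • ω - (σ : E3)) =
          xiMinus (r0 • ω) σ + (-(r0 / 2 * (1 - ⟪ω, (σ : E3)⟫))) • ω := by
        rw [xiMinus, hξn]; module
      rw [h1]
      have := hG.add_le (xiMinus (r0 • ω) σ) ((-(r0 / 2 * (1 - ⟪ω, (σ : E3)⟫))) • ω)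
      rw [hall ω hω0] at this
      linarith
    refine hL ω hω (lam_finite b hb_nonneg ψ t (r0 • ω) ω hξ0 (by rw [hξn]) (hInt _) R hRω
      (16 / (c * r0 ^ 2)) fun σ => ?_)
    have hp : ⟪ω, (rotS R σ : E3)⟫ = ⟪ω, (σ : E3)⟫ := by
      rw [rotS_coe]; nth_rewrite 1 [← hRω]; rw [R.inner_map_map]
    have h1 := hz σ
    have h2 := hz (rotS R σ)
    have h3 := hum σ
    have h4 := hum (rotS R σ)
    have h5 : (r0 / 2) • (⟪ω, (rotS R σ : E3)⟫ • ω - (rotS R σ : E3)) =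
        R ((r0 / 2) • (⟪ω, (σ : E3)⟫ • ω - (σ : E3))) := by
      rw [hp, rotS_coe, map_smul, map_sub, map_smul, hRω]
    rw [h5] at h2
    set z := (r0 / 2) • (⟪ω, (σ : E3)⟫ • ω - (σ : E3)) with hzd
    have hzn : ‖z‖ ^ 2 = r0 ^ 2 / 4 * (1 - ⟪ω, (σ : E3)⟫ ^ 2) := by
      rw [hzd, norm_smul, mul_pow, norm_sub_sq_real, norm_smul, hω, real_inner_smul_left]
      simp only [norm_eq_of_mem_sphere, Real.norm_eq_abs, mul_pow, sq_abs]
      ring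
    have hzp : ⟪ω, z⟫ = 0 := by
      rw [hzd, real_inner_smul_right, inner_sub_right, real_inner_smul_right, real_inner_self_eq_norm_sq, hω]
      ring
    have hzr : ‖z‖ ≤ r0 := by
      apply le_of_sq_le_sq _ hr0.le
      rw [hzn]; nlinarith [sq_nonneg r0, mul_nonneg (sq_nonneg r0) (sq_nonneg ⟪ω, (σ : E3)⟫)]
    have h6 := h z hzp hzr
    rw [hzn] at h6
    rw [div_mul_eq_mul_div, le_div_iff₀ (by positivity)]
    linarith
  · have hu0 : ∀ s > 0, u ((s:ℝ) • ν) = 0 ∧ u (s • R ν) = 0 := fun s hs => by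
      have h1 := hν0 s hs
      simp only [map_smul] at h1
      have h2 := hG.nonneg (s • ν)
      have h3 := hG.nonneg (s • R ν)
      constructor <;> linarith
    obtain ⟨α, β, γ, hx⟩ := hspan ν hων hν η
    have : u η = 0 := by
      rw [hx]
      exact hadd0 _ _ (hadd0 _ _ (hall ω hω0 _) (hall ν (fun s hs => (hu0 s hs).1) _))
        (hall (R ν) (fun s hs => (hu0 s hs).2) _)
    exact absurd hη (by rw [show (1 - ‖ψ t η‖ ^ 2) = u η from rfl, this]; simp)

lemma sq_diff_le (x y w : ℝ) (hx : 0 ≤ x) (hx1 : x ≤ 1) (hy : 0 ≤ y) (hy1 : y ≤ 1) (hw : 0 ≤ w)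
    (h : x - y ≤ w) : x ^ 2 - y ^ 2 ≤ 2 * w := by
  have : x ^ 2 - y ^ 2 = (x - y) * (x + y) := by ring
  rw [this]
  calc (x - y) * (x + y) ≤ w * (x + y) := mul_le_mul_of_nonneg_right h (by linarith)
    _ ≤ w * 2 := mul_le_mul_of_nonneg_left (by linarith) hw
    _ = 2 * w := by ring

lemma scal_fin (f a q w : ℝ) (hf : 0 < f) (ha : 0 < a) (hq : 0 ≤ q) (hq1 : q ≤ 1)
    (h : f - f * (1 + a * q)⁻¹ ≤ 2 * w) : q ≤ 2 * (1 + a) / (f * a) * w := by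
  have hpos : (0:ℝ) < 1 + a * q := by positivity
  have h1 : f - f * (1 + a * q)⁻¹ = f * a * q / (1 + a * q) := by
    field_simp; ring
  have h2 : f * a * q / (1 + a) ≤ f * a * q / (1 + a * q) := by
    apply div_le_div_of_nonneg_left (by positivity) hpos
    nlinarith
  have e6 : f * a * q / (1 + a) ≤ 2 * w := by linarith
  rw [div_le_iff₀ (by positivity)] at e6
  rw [div_mul_eq_mul_div, le_div_iff₀ (by positivity)]
  linarith

set_option maxHeartbeats 1000000 in
lemma caseII (b : ℝ → ℝ) (hb_nonneg : ∀ x, 0 ≤ b x) (ψ : ℝ → E3 → ℂ) (t : ℝ)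
    (hInt : ∀ ξ, Integrable (bobylevIntegrand b ψ t ξ) sphμ)
    (hL : ∀ e : E3, ‖e‖ = 1 → ¬ Lam b e < ⊤)
    (hcf : IsCharFn (ψ t)) (hcont : Continuous (ψ t)) (η : E3) (hη : 0 < 1 - ‖ψ t η‖ ^ 2)
    (k : ℕ) (hk : 0 < k) :
    ∃ δ > 0, ∀ ξ, ‖ψ t ξ‖ ^ 2 ≤ ((1 + δ * ‖ξ‖ ^ 2) ^ k)⁻¹ := by
  obtain ⟨c, hc, r0, hr0, hnear⟩ := near_zero b hb_nonneg ψ t hInt hL hcf hcont η hη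
  have hle := charfn_norm_le hcf
  have hk' : (0:ℝ) < k := by exact_mod_cast hk
  set δ := c / k with hδ
  have hδ0 : 0 < δ := by positivity
  set E : ℝ → ℝ := fun x => ((1 + δ * x) ^ k)⁻¹ with hE
  refine ⟨δ, hδ0, ?_⟩
  have hsmall : ∀ ξ : E3, ‖ξ‖ ≤ r0 → ‖ψ t ξ‖ ^ 2 ≤ E (‖ξ‖ ^ 2) := by
    intro ξ hξ
    have h1 := hnear ξ hξ
    have h2 : 1 - c * ‖ξ‖ ^ 2 ≤ E (‖ξ‖ ^ 2) := by
      have h3 : (1 + δ * ‖ξ‖ ^ 2) ^ k ≤ Real.exp (c * ‖ξ‖ ^ 2) := by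
        calc (1 + δ * ‖ξ‖ ^ 2) ^ k ≤ (Real.exp (δ * ‖ξ‖ ^ 2)) ^ k := by
              gcongr; linarith [Real.add_one_le_exp (δ * ‖ξ‖ ^ 2)]
          _ = Real.exp (c * ‖ξ‖ ^ 2) := by
              rw [← Real.exp_nat_mul, hδ]; congr 1; field_simp
      have h4 : Real.exp (-(c * ‖ξ‖ ^ 2)) ≤ E (‖ξ‖ ^ 2) := by
        rw [Real.exp_neg]; simp only [hE]; gcongr
      linarith [Real.add_one_le_exp (-(c * ‖ξ‖ ^ 2))]
    linarith
  by_contra hcon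
  push Not at hcon
  obtain ⟨ξ₁, hξ₁⟩ := hcon
  have hξ₁' : E (‖ξ₁‖ ^ 2) < ‖ψ t ξ₁‖ ^ 2 := hξ₁
  set Z : Set E3 := {ξ | ‖ξ‖ ≤ ‖ξ₁‖ ∧ r0 ≤ ‖ξ‖ ∧ E (‖ξ‖ ^ 2) ≤ ‖ψ t ξ‖ ^ 2} with hZ
  have hEc : Continuous (fun ξ : E3 => E (‖ξ‖ ^ 2)) := by
    simp only [hE]
    apply Continuous.inv₀ (by fun_prop)
    intro ξ; positivity
  have c1 : IsClosed {ξ : E3 | ‖ξ‖ ≤ ‖ξ₁‖} := isClosed_le continuous_norm continuous_const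
  have c2 : IsClosed {ξ : E3 | r0 ≤ ‖ξ‖} := isClosed_le continuous_const continuous_norm
  have c3 : IsClosed {ξ : E3 | E (‖ξ‖ ^ 2) ≤ ‖ψ t ξ‖ ^ 2} := isClosed_le hEc (by fun_prop)
  have hZc : IsClosed Z :=
    IsClosed.inter c1 (IsClosed.inter c2 c3)
  have hZK : IsCompact Z := (isCompact_closedBall (0:E3) ‖ξ₁‖).of_isClosed_subset hZc
    (fun ξ hξ => by rw [mem_closedBall_zero_iff]; exact hξ.1)
  have hZne : Z.Nonempty := ⟨ξ₁, le_rfl, by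
    by_contra h
    exact absurd (hsmall ξ₁ (not_le.1 h).le) (not_le.2 hξ₁'), hξ₁'.le⟩
  obtain ⟨ξ, ⟨hξ1, hξr, hξE⟩, hmin⟩ := hZK.exists_isMinOn hZne (f := fun ξ => ‖ξ‖)
    continuous_norm.continuousOn
  have hlt : ∀ ζ : E3, ‖ζ‖ ^ 2 < ‖ξ‖ ^ 2 → ‖ψ t ζ‖ ^ 2 ≤ E (‖ζ‖ ^ 2) := by
    intro ζ hζ2
    have hζ : ‖ζ‖ < ‖ξ‖ := lt_of_pow_lt_pow_left₀ 2 (norm_nonneg _) hζ2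
    rcases le_total ‖ζ‖ r0 with h | h
    · exact hsmall ζ h
    · by_contra h2
      have := hmin (show ζ ∈ Z from ⟨hζ.le.trans hξ1, h, (not_le.1 h2).le⟩)
      simp only [mem_ofPred_eq] at this
      linarith
  have hξp : 0 < ‖ξ‖ := lt_of_lt_of_le hr0 hξr
  have hξ0 : ξ ≠ 0 := norm_pos_iff.1 hξp
  obtain ⟨e, he, hξe⟩ := exists_dir ξ hξ0
  set X := δ * ‖ξ‖ ^ 2 with hX
  have hX0 : 0 < X := by positivity
  set a := X ^ 2 / (4 * (1 + X)) with ha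
  have ha0 : 0 < a := by positivity
  have hf0 : 0 < ‖ψ t ξ‖ ^ 2 := lt_of_lt_of_le (by simp only [hE]; positivity) hξE
  set f := ‖ψ t ξ‖ ^ 2 with hf
  refine hL e he (lam_finite b hb_nonneg ψ t ξ e hξ0 hξe (hInt ξ) (LinearIsometryEquiv.refl ℝ E3) rfl
    (2 * (1 + a) / (f * a)) fun σ => ?_)
  set p := ⟪e, (σ : E3)⟫ with hp
  have hpabs := p_mem e he σ
  have hq1 : 0 ≤ 1 - p ^ 2 := by
    have := (sq_le_one_iff_abs_le_one _).2 hpabs; linarith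
  set w := ‖ψ t (xiPlus ξ σ) * ψ t (xiMinus ξ σ) - ψ t ξ‖ with hw
  have hw0 : 0 ≤ w := norm_nonneg _
  have hC0 : 0 ≤ 2 * (1 + a) / (f * a) := by positivity
  have hgoal : 1 - p ^ 2 ≤ 2 * (1 + a) / (f * a) * w := by
    rcases hq1.eq_or_lt with hq0 | hq0
    · rw [← hq0]; positivity
    have hp1 : |p| < 1 := (sq_lt_one_iff_abs_lt_one _).1 (by linarith)
    obtain ⟨hpl, hpu⟩ := abs_lt.1 hp1
    have hxx : 0 < ‖ξ‖ ^ 2 := by positivity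
    have e1 := hlt (xiPlus ξ σ) (by rw [normsq_plus ξ e hξe σ, ← hp]; nlinarith)
    have e2 := hlt (xiMinus ξ σ) (by rw [normsq_minus ξ e hξe σ, ← hp]; nlinarith)
    rw [normsq_plus ξ e hξe σ, ← hp] at e1
    rw [normsq_minus ξ e hξe σ, ← hp] at e2
    have e3 : ‖ψ t (xiPlus ξ σ)‖ ^ 2 * ‖ψ t (xiMinus ξ σ)‖ ^ 2 ≤ f * (1 + a * (1 - p ^ 2))⁻¹ := by
      have hpos : (0:ℝ) < 1 + a * (1 - p ^ 2) := by positivity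
      calc _ ≤ E (‖ξ‖ ^ 2 * ((1 + p) / 2)) * E (‖ξ‖ ^ 2 * ((1 - p) / 2)) :=
          mul_le_mul e1 e2 (sq_nonneg _) ((sq_nonneg _).trans e1)
        _ = E (‖ξ‖ ^ 2) * ((1 + a * (1 - p ^ 2)) ^ k)⁻¹ := by
            simp only [hE]
            rw [← mul_inv, ← mul_inv, ← mul_pow, ← mul_pow]
            congr 2
            rw [← hX, ha]
            have : (1 + δ * (‖ξ‖ ^ 2 * ((1 + p) / 2))) * (1 + δ * (‖ξ‖ ^ 2 * ((1 - p) / 2))) =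
              (1 + X * ((1 + p) / 2)) * (1 + X * ((1 - p) / 2)) := by rw [hX]; ring
            rw [this]; field_simp; ring
        _ ≤ f * (1 + a * (1 - p ^ 2))⁻¹ := by
            gcongr
            apply le_self_pow₀ _ hk.ne'
            have := mul_nonneg ha0.le hq1
            linarith
    have e4 : f - ‖ψ t (xiPlus ξ σ)‖ ^ 2 * ‖ψ t (xiMinus ξ σ)‖ ^ 2 ≤ 2 * w := by
      have h1 := norm_sub_norm_le (ψ t ξ) (ψ t (xiPlus ξ σ) * ψ t (xiMinus ξ σ))
      rw [norm_sub_rev, ← hw] at h1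
      rw [← mul_pow, ← norm_mul, hf]
      have h2 := hle ξ
      have h3 : ‖ψ t (xiPlus ξ σ) * ψ t (xiMinus ξ σ)‖ ≤ 1 := by
        rw [norm_mul]; exact mul_le_one₀ (hle _) (norm_nonneg _) (hle _)
      exact sq_diff_le _ _ _ (norm_nonneg _) h2 (norm_nonneg _) h3 hw0 h1
    exact scal_fin _ _ _ _ hf0 ha0 hq1 (by linarith [sq_nonneg p]) (by linarith)
  refine hgoal.trans ?_
  refine mul_le_mul_of_nonneg_left ?_ hC0
  linarith [norm_nonneg (ψ t (xiPlus ξ (rotS (LinearIsometryEquiv.refl ℝ E3) σ)) *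
    ψ t (xiMinus ξ (rotS (LinearIsometryEquiv.refl ℝ E3) σ)) - ψ t ξ)]

end

section
open MeasureTheory Real Filter Metric Set
open scoped RealInnerProductSpace Topology

lemma finish_int (f : E3 → ℝ) (N : ℕ) (δ : ℝ) (hδ : 0 < δ)
    (h : ∀ ξ, f ξ ≤ ((1 + δ * ‖ξ‖ ^ 2) ^ (N + 2))⁻¹) :
    (∫⁻ ξ : E3, ENNReal.ofReal ((1 + ‖ξ‖ ^ 2) ^ N * f ξ)) < ⊤ := by
  set m := min 1 δ with hm
  have hm0 : 0 < m := lt_min one_pos hδ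
  have hInt : Integrable (fun x : E3 => (m ^ (N + 2))⁻¹ * ((1 : ℝ) + ‖x‖ ^ 2) ^ (-(4:ℝ) / 2)) volume :=
    (integrable_rpow_neg_one_add_norm_sq (by simp; norm_num)).const_mul _
  refine lt_of_le_of_lt (lintegral_mono fun ξ => ENNReal.ofReal_le_ofReal ?_) hInt.lintegral_lt_top
  have hx : (0:ℝ) < 1 + ‖ξ‖ ^ 2 := by positivity
  have h1 : m * (1 + ‖ξ‖ ^ 2) ≤ 1 + δ * ‖ξ‖ ^ 2 := by
    have a1 : m ≤ 1 := min_le_left _ _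
    have a2 : m ≤ δ := min_le_right _ _
    nlinarith [sq_nonneg ‖ξ‖]
  have h2 : f ξ ≤ ((m * (1 + ‖ξ‖ ^ 2)) ^ (N + 2))⁻¹ := by
    refine (h ξ).trans ?_
    gcongr
  have h3 : ((1 : ℝ) + ‖ξ‖ ^ 2) ^ (-(4:ℝ) / 2) = ((1 + ‖ξ‖ ^ 2) ^ 2)⁻¹ := by
    rw [show (-(4:ℝ) / 2) = -((2:ℕ):ℝ) by norm_num, Real.rpow_neg hx.le, Real.rpow_natCast]
  rw [h3]
  calc (1 + ‖ξ‖ ^ 2) ^ N * f ξ ≤ (1 + ‖ξ‖ ^ 2) ^ N * ((m * (1 + ‖ξ‖ ^ 2)) ^ (N + 2))⁻¹ := by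
        gcongr
    _ = _ := by
        rw [mul_pow, pow_add (1 + ‖ξ‖ ^ 2)]
        field_simp

end


/-- Villani conjecture, local-in-time H^∞ smoothing for measure
initial data in `𝒦^α` which are not a single Dirac mass. -/
theorem villani_smoothing_local
    (s K : ℝ) (hs0 : 0 < s) (hs1 : s < 1) (hK : 0 < K)
    (b : ℝ → ℝ) (hb_meas : Measurable b) (hb_nonneg : ∀ x, 0 ≤ b x)
    (hb_sing : KernelSingular b s K)
    (α : ℝ) (hα : 2 * s < α) (hα2 : α ≤ 2)
    (F₀ : Measure E3) [IsProbabilityMeasure F₀]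
    (hnotdirac : ∀ v₀ : E3, F₀ {v₀} ≠ 1)
    (ψ₀ : E3 → ℂ) (hψ₀ : ψ₀ = charFn F₀) (hψ₀K : KBdd α ψ₀)
    (ψ : ℝ → E3 → ℂ) (hψ : IsBobylevSolution b ψ ψ₀)
    (hψK : ∀ t ≥ 0, KBdd α (ψ t)) (hψcont : KContinuous α ψ) :
    ∃ T > 0, ∀ t ∈ Set.Ioc (0:ℝ) T, ∀ N : ℕ,
      (∫⁻ ξ : E3, ENNReal.ofReal ((1 + ‖ξ‖ ^ 2) ^ N * ‖ψ t ξ‖ ^ 2)) < ⊤ := by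
  have hcf0 : IsCharFn ψ₀ := ⟨F₀, inferInstance, hψ₀⟩
  obtain ⟨η, hη⟩ : ∃ η, ‖ψ₀ η‖ < 1 := by
    by_contra hcon
    push Not at hcon
    obtain ⟨v₀, hv⟩ := dirac_of_norm_one (Ψ := F₀) inferInstance
      (fun ξ => by rw [← hψ₀]; exact le_antisymm (charfn_norm_le hcf0 ξ) (hcon ξ))
    exact hnotdirac v₀ hv
  set μ0 := (1 - ‖ψ₀ η‖ ^ 2) / 2 with hμ0
  have hμ : 0 < μ0 := by
    rw [hμ0]; nlinarith [norm_nonneg (ψ₀ η)]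
  have hc0 : ContinuousWithinAt (fun τ => 1 - ‖ψ τ η‖ ^ 2) (Ici 0) 0 :=
    continuousWithinAt_const.sub (((hψ.eq 0 le_rfl η).continuousWithinAt.norm).pow 2)
  have hev : ∀ᶠ τ in 𝓝[Ici 0] (0:ℝ), μ0 < 1 - ‖ψ τ η‖ ^ 2 := by
    apply hc0.eventually_const_lt
    show μ0 < 1 - ‖ψ 0 η‖ ^ 2
    rw [hψ.init]; linarith
  obtain ⟨T', hT', hTs⟩ := Metric.mem_nhdsWithin_iff.1 hev
  refine ⟨T' / 2, by positivity, ?_⟩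
  have hT : ∀ τ, 0 ≤ τ → τ ≤ T' / 2 → μ0 ≤ 1 - ‖ψ τ η‖ ^ 2 := by
    intro τ h0 h1
    have : τ ∈ {x | μ0 < 1 - ‖ψ x η‖ ^ 2} := hTs ⟨by
      rw [Metric.mem_ball, Real.dist_eq, sub_zero, abs_of_nonneg h0]; linarith, h0⟩
    exact le_of_lt this
  intro t ht N
  obtain ⟨κ, hκ, hco⟩ := coercive s K hs0 hs1 hK b hb_meas hb_nonneg hb_sing η μ0 hμ
  have he₀ : ‖(EuclideanSpace.single 0 1 : E3)‖ = 1 := by simp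
  set e₀ : E3 := EuclideanSpace.single 0 1
  have key : ∃ δ > 0, ∀ ξ, ‖ψ t ξ‖ ^ 2 ≤ ((1 + δ * ‖ξ‖ ^ 2) ^ (N + 2))⁻¹ := by
    by_cases hL : Lam b e₀ < ⊤
    · refine caseI b hb_meas hb_nonneg s κ hs0 hs1 ψ ψ₀ hψ t ht.1 ?_ hκ e₀ he₀ hL (N + 2) (by omega)
      intro τ h0 h1 ξ e he hξ
      obtain ⟨G, hG⟩ := charfn_isU (hψ.isCharFn τ h0)
      exact hco G _ hG (hT τ h0 (h1.trans ht.2)) ξ e he hξ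
    · have hcont : Continuous (ψ t) := by
        have h := hψ.cont.comp (f := fun ξ : E3 => (t, ξ)) (s := univ) (by fun_prop)
          (fun ξ _ => ⟨ht.1.le, mem_univ _⟩)
        exact continuousOn_univ.1 h
      exact caseII b hb_nonneg ψ t (hψ.integrable t ht.1.le)
        (fun e he => by rw [Lam_eq b hb_meas e e₀ he he₀]; exact hL)
        (hψ.isCharFn t ht.1.le) hcont η (lt_of_lt_of_le hμ (hT t ht.1.le ht.2)) (N + 2) (by omega)
  obtain ⟨δ, hδ, h⟩ := key
  exact finish_int (fun ξ => ‖ψ t ξ‖ ^ 2) N δ hδ h
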